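/- There exists d₀ such that the following holds. Let G be an (n,d,λ)-graph with λ/d ≤ 0.001 and d ≥ d₀. Then G contains a spanning crown, i.e., a crown on n vertices, with ⌊n/2⌋ spikes. -/

import Mathlib

open scoped Classical

/-- An `(n,d,λ)`-graph: a `d`-regular graph on `n` vertices such that all eigenvalues of its
adjacency matrix except the largest one (which equals `d`) are at most `lam` in absolute value. -/
def IsNDLGraph (n : ℕ) (G : SimpleGraph (Fin n)) (d : ℕ) (lam : ℝ) : Prop :=
  G.IsRegularOfDegree d ∧
  ∃ (h : (G.adjMatrix ℝ).IsHermitian) (i₀ : Fin n),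
    h.eigenvalues i₀ = (d : ℝ) ∧ ∀ i, i ≠ i₀ → |h.eigenvalues i| ≤ lam

/-- `G` contains a crown on all of its `n` vertices with `k` spikes: a cycle `c` of `G` together
with a set `M` of `k` edges of `G` forming a matching, edge-disjoint from the cycle, each matching
edge having exactly one vertex in common with the cycle, and every vertex of `G` lying on the
cycle or on a matching edge. -/
def ContainsSpanningCrown (n : ℕ) (G : SimpleGraph (Fin n)) (k : ℕ) : Prop :=
  ∃ (v : Fin n) (c : G.Walk v v) (M : Finset (Sym2 (Fin n))),
    c.IsCycle ∧ M.card = k ∧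
    (∀ e ∈ M, e ∈ G.edgeSet) ∧
    (∀ e ∈ M, ∀ f ∈ M, e ≠ f → ∀ x : Fin n, x ∈ e → x ∉ f) ∧
    (∀ e ∈ M, e ∉ c.edges) ∧
    (∀ e ∈ M, ∃! x : Fin n, x ∈ e ∧ x ∈ c.support) ∧
    (∀ x : Fin n, x ∈ c.support ∨ ∃ e ∈ M, x ∈ e)

/-!
A uniformly random 3-colouring of the vertices gives, with positive probability, every vertex at
least `0.3 d` neighbours of each colour: each bad event is exponentially unlikely in `d` and depends
on `O(d²)` others, so the local lemma applies. By expander mixing, a set `X` of at most about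
`n / 250` vertices then has at least `4 |X|` neighbours in any set containing a colour class, and
any two sets of more than `n / 500` vertices span an edge.

The cycle is built to contain all of colour 0 and to avoid colour 1. The vertices of colour 0 are
merged into a single path by short paths through colour 2. To merge two of `k` paths, grow binary
trees inside colour 2 at one end of each, keeping the forest extendable in the sense of Friedman and
Pippenger, until each half of the paths carries `s > n / 500` leaves. Joinedness then gives an edge
between the two halves, and rolling back all but the two branches it connects keeps extendability.
The depths needed, about `log₂ (s / k)`, sum to `O(s)` over all the merges, so the path is short
enough to be lengthened and closed to a cycle on exactly `⌈n / 2⌉` vertices.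

Since the cycle contains colour 0 and its complement contains colour 1, small sets on either side
expand into the other, large ones are handled by joinedness, and Hall's theorem matches the
complement into the cycle.
-/

section Mixing

open Finset Matrix

variable {V : Type*} [Fintype V]

lemma dotProduct_eq_sum_mul_orthonormalBasis {ι : Type*} [Fintype ι]
    (b : OrthonormalBasis ι ℝ (EuclideanSpace ℝ V)) (f g : V → ℝ) :
    f ⬝ᵥ g = ∑ i, (f ⬝ᵥ b i) * (g ⬝ᵥ b i) := by
  have h := b.sum_inner_mul_inner (WithLp.toLp 2 f) (WithLp.toLp 2 g)
  simp only [EuclideanSpace.inner_eq_star_dotProduct, star_trivial] at h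
  rw [dotProduct_comm, ← h]
  exact sum_congr rfl fun i _ => by rw [dotProduct_comm f]

variable [DecidableEq V]

lemma mulVec_dotProduct_eigenvectorBasis {A : Matrix V V ℝ} (hA : A.IsHermitian) (g : V → ℝ)
    (i : V) :
    (A *ᵥ g) ⬝ᵥ hA.eigenvectorBasis i = hA.eigenvalues i * (g ⬝ᵥ hA.eigenvectorBasis i) := by
  have hT : Aᵀ = A := by simpa only [conjTranspose_eq_transpose_of_trivial] using hA.eq
  rw [← smul_eq_mul, ← dotProduct_smul, ← hA.mulVec_eigenvectorBasis i, dotProduct_mulVec,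
    ← mulVec_transpose, hT]

lemma dotProduct_eigenvectorBasis_eq_zero {A : Matrix V V ℝ} (hA : A.IsHermitian) {x : V → ℝ}
    {μ : ℝ} (hx : A *ᵥ x = μ • x) {i : V} (hi : hA.eigenvalues i ≠ μ) :
    x ⬝ᵥ hA.eigenvectorBasis i = 0 := by
  have h := mulVec_dotProduct_eigenvectorBasis hA x i
  rw [hx, smul_dotProduct, smul_eq_mul] at h
  exact (mul_eq_mul_right_iff.1 h).resolve_left hi.symm

theorem abs_dotProduct_mulVec_sub_le {A : Matrix V V ℝ} (hA : A.IsHermitian) {x : V → ℝ}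
    {i₀ : V} {lam : ℝ} (hx : A *ᵥ x = hA.eigenvalues i₀ • x) (hx0 : x ≠ 0) (hlam : 0 ≤ lam)
    (hgap : lam < hA.eigenvalues i₀) (hle : ∀ i ≠ i₀, |hA.eigenvalues i| ≤ lam) (f g : V → ℝ) :
    |f ⬝ᵥ A *ᵥ g - hA.eigenvalues i₀ * ((f ⬝ᵥ x) * (g ⬝ᵥ x)) / (x ⬝ᵥ x)|
      ≤ lam * √((f ⬝ᵥ f) * (g ⬝ᵥ g)) := by
  set coord : (V → ℝ) → V → ℝ := fun h i => h ⬝ᵥ hA.eigenvectorBasis i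
  have parseval (h k : V → ℝ) : h ⬝ᵥ k = ∑ i, coord h i * coord k i :=
    dotProduct_eq_sum_mul_orthonormalBasis hA.eigenvectorBasis h k
  have hcoord : ∀ i ≠ i₀, coord x i = 0 := fun i hi =>
    dotProduct_eigenvectorBasis_eq_zero hA hx ((le_of_abs_le (hle i hi)).trans_lt hgap).ne
  have hdot_x (h : V → ℝ) : h ⬝ᵥ x = coord h i₀ * coord x i₀ := by
    rw [parseval, sum_eq_single i₀ (fun i _ hi => by rw [hcoord i hi, mul_zero]) (by simp)]
  have hx₀ : coord x i₀ ≠ 0 := fun h0 =>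
    hx0 (dotProduct_self_eq_zero.1 (by rw [hdot_x, h0, mul_zero]))
  have hmain : hA.eigenvalues i₀ * ((f ⬝ᵥ x) * (g ⬝ᵥ x)) / (x ⬝ᵥ x)
      = hA.eigenvalues i₀ * (coord f i₀ * coord g i₀) := by
    rw [hdot_x f, hdot_x g, hdot_x x]; field_simp
  have hform : f ⬝ᵥ A *ᵥ g = ∑ i, hA.eigenvalues i * (coord f i * coord g i) := by
    rw [parseval]
    refine sum_congr rfl fun i _ => ?_
    rw [show coord (A *ᵥ g) i = _ from mulVec_dotProduct_eigenvectorBasis hA g i]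
    ring
  have cauchy_schwarz : ∑ i, |coord f i| * |coord g i| ≤ √((f ⬝ᵥ f) * (g ⬝ᵥ g)) := by
    refine Real.le_sqrt_of_sq_le ((sum_mul_sq_le_sq_mul_sq _ _ _).trans_eq ?_)
    simp only [sq, abs_mul_abs_self, parseval f f, parseval g g]
  rw [hmain, hform, ← add_sum_erase univ _ (mem_univ i₀), add_sub_cancel_left]
  calc |∑ i ∈ univ.erase i₀, hA.eigenvalues i * (coord f i * coord g i)|
      ≤ ∑ i ∈ univ.erase i₀, lam * (|coord f i| * |coord g i|) := by
        refine (abs_sum_le_sum_abs _ _).trans (sum_le_sum fun i hi => ?_)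
        rw [abs_mul, abs_mul]
        exact mul_le_mul_of_nonneg_right (hle i (ne_of_mem_erase hi)) (by positivity)
    _ ≤ lam * ∑ i, |coord f i| * |coord g i| := by
        rw [mul_sum]
        exact sum_le_sum_of_subset_of_nonneg (subset_univ _) fun i _ _ => by positivity
    _ ≤ lam * √((f ⬝ᵥ f) * (g ⬝ᵥ g)) := mul_le_mul_of_nonneg_left cauchy_schwarz hlam

lemma indicator_dotProduct_adjMatrix_mulVec (G : SimpleGraph V) (S T : Finset V) :
    (fun x => if x ∈ S then (1 : ℝ) else 0) ⬝ᵥ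
        (G.adjMatrix ℝ *ᵥ fun x => if x ∈ T then (1 : ℝ) else 0)
      = ∑ x ∈ S, (#{y ∈ T | G.Adj x y} : ℝ) := by
  simp only [dotProduct, SimpleGraph.adjMatrix_mulVec_apply, ite_mul, one_mul, zero_mul,
    sum_ite_mem, univ_inter, sum_const, nsmul_eq_mul, mul_one]
  refine sum_congr rfl fun x _ => ?_
  congr 2
  ext y
  simp [and_comm]

end Mixing

section Joined

open Finset

variable {V : Type*} (G : SimpleGraph V)

/-- `G` is `s`-joined: any two sets of at least `s` vertices, disjoint or not, span an edge
of `G` between them. -/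
def IsJoined (s : ℕ) : Prop :=
  ∀ ⦃A B : Finset V⦄, s ≤ #A → s ≤ #B → ∃ a ∈ A, ∃ b ∈ B, G.Adj a b

/-- The neighbourhood of the vertex set `U` inside `F`. Members of `U` are not excluded. -/
noncomputable def nbrsIn (F U : Finset V) : Finset V :=
  {y ∈ F | ∃ u ∈ U, G.Adj u y}

variable {G}

lemma mem_nbrsIn {F U : Finset V} {y : V} : y ∈ nbrsIn G F U ↔ y ∈ F ∧ ∃ u ∈ U, G.Adj u y :=
  mem_filter

lemma filter_adj_nbrsIn {F U : Finset V} {x : V} (hx : x ∈ U) :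
    {y ∈ nbrsIn G F U | G.Adj x y} = {y ∈ F | G.Adj x y} := by
  ext y
  simp only [mem_filter, mem_nbrsIn]
  exact ⟨fun h => ⟨h.1.1, h.2⟩, fun h => ⟨⟨h.1, x, hx, h.2⟩, h.2⟩⟩

end Joined

section NDLGraph

open Finset Matrix

variable {n d : ℕ} {lam : ℝ} {G : SimpleGraph (Fin n)}

lemma IsNDLGraph.pos (hG : IsNDLGraph n G d lam) : 0 < n := by
  obtain ⟨-, -, i₀, -⟩ := hG
  exact i₀.pos

lemma IsNDLGraph.mono {lam' : ℝ} (hG : IsNDLGraph n G d lam) (h : lam ≤ lam') :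
    IsNDLGraph n G d lam' := by
  obtain ⟨hreg, hA, i₀, h₀, hle⟩ := hG
  exact ⟨hreg, hA, i₀, h₀, fun i hi => (hle i hi).trans h⟩

theorem IsNDLGraph.expander_mixing (hG : IsNDLGraph n G d lam) (hlam : 0 ≤ lam)
    (hgap : lam < d) (S T : Finset (Fin n)) :
    |∑ x ∈ S, (#{y ∈ T | G.Adj x y} : ℝ) - d * (#S * #T) / n| ≤ lam * √(#S * #T) := by
  obtain ⟨hreg, hA, i₀, h₀, hle⟩ := hG
  have hone : G.adjMatrix ℝ *ᵥ 1 = hA.eigenvalues i₀ • (1 : Fin n → ℝ) := by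
    ext x
    simp [h₀, SimpleGraph.adjMatrix_mulVec_apply, hreg x]
  have hmix := abs_dotProduct_mulVec_sub_le hA hone (Function.ne_iff.2 ⟨i₀, one_ne_zero⟩) hlam
    (h₀ ▸ hgap) hle (fun x => if x ∈ S then 1 else 0) (fun x => if x ∈ T then 1 else 0)
  have hdot (U : Finset (Fin n)) : (fun x => if x ∈ U then (1 : ℝ) else 0) ⬝ᵥ 1 = #U := by
    simp [dotProduct]
  have hself (U : Finset (Fin n)) : (fun x => if x ∈ U then (1 : ℝ) else 0) ⬝ᵥ
      (fun x => if x ∈ U then (1 : ℝ) else 0) = #U := by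
    simp [dotProduct]
  have hn : (1 : Fin n → ℝ) ⬝ᵥ 1 = n := by simp [dotProduct]
  rwa [indicator_dotProduct_adjMatrix_mulVec, hdot, hdot, hn, hself, hself, h₀] at hmix

lemma IsNDLGraph.mul_card_le {k : ℝ} (hG : IsNDLGraph n G d lam) (hlam : 0 ≤ lam)
    (hgap : lam < d) {S T : Finset (Fin n)} (hk : ∀ x ∈ S, k ≤ #{y ∈ T | G.Adj x y}) :
    k * #S ≤ d * (#S * #T) / n + lam * √(#S * #T) := by
  have hmix := (le_abs_self _).trans (hG.expander_mixing hlam hgap S T)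
  have hsum := card_nsmul_le_sum S (fun x => (#{y ∈ T | G.Adj x y} : ℝ)) k hk
  rw [nsmul_eq_mul] at hsum
  linarith

lemma IsNDLGraph.le_of_card_le {k c : ℝ} (hG : IsNDLGraph n G d lam) (hlam : 0 ≤ lam)
    (hgap : lam < d) {S T : Finset (Fin n)} (hS : S.Nonempty) (hc : 0 ≤ c)
    (hT : (#T : ℝ) ≤ c ^ 2 * #S) (hk : ∀ x ∈ S, k ≤ #{y ∈ T | G.Adj x y}) :
    k ≤ d * (c ^ 2 * #S) / n + lam * c := by
  have hS₀ : (0 : ℝ) < #S := by exact_mod_cast hS.card_pos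
  refine le_of_mul_le_mul_right ?_ hS₀
  calc k * #S ≤ d * (#S * #T) / n + lam * √(#S * #T) := hG.mul_card_le hlam hgap hk
    _ ≤ d * (#S * (c ^ 2 * #S)) / n + lam * √(#S * (c ^ 2 * #S)) := by gcongr
    _ = (d * (c ^ 2 * #S) / n + lam * c) * #S := by
      rw [show (#S * (c ^ 2 * #S) : ℝ) = (c * #S) ^ 2 by ring, Real.sqrt_sq (by positivity)]
      ring

theorem IsNDLGraph.isJoined (hG : IsNDLGraph n G d lam) (hlam : 0 ≤ lam) (hgap : lam < d) {s : ℕ}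
    (hs : lam * n < d * s) : IsJoined G s := by
  intro A B hA hB
  by_contra! hAB
  have hn : (0 : ℝ) < n := by exact_mod_cast hG.pos
  have hzero : ∑ x ∈ A, (#{y ∈ B | G.Adj x y} : ℝ) = 0 := sum_eq_zero fun x hx => by
    rw [filter_false_of_mem (hAB x hx), card_empty, Nat.cast_zero]
  have hmix := hG.expander_mixing hlam hgap A B
  set t := √(#A * #B : ℝ)
  have htt : t * t = #A * #B := Real.mul_self_sqrt (by positivity)
  have hst : (s : ℝ) ≤ t := Real.le_sqrt_of_sq_le (by rw [sq]; gcongr)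
  have ht : 0 < t := by
    have : 0 < (d : ℝ) * s := (by positivity : 0 ≤ lam * n).trans_lt hs
    exact (pos_of_mul_pos_right this (by positivity)).trans_le hst
  rw [hzero, zero_sub, abs_neg, abs_of_nonneg (by positivity), div_le_iff₀ hn, ← htt] at hmix
  have hdt : d * t ≤ lam * n := le_of_mul_le_mul_right (by linarith) ht
  exact (hs.trans_le (by gcongr)).not_ge hdt

lemma IsNDLGraph.four_mul_card_le_card_nbrsIn (hG : IsNDLGraph n G d (d / 1000)) (hd : 0 < d)
    (hn : 1000 ≤ n) {X F : Finset (Fin n)} (hX : #X ≤ 2 * (n / 500 + 1))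
    (hdeg : ∀ x ∈ X, 3 * d ≤ 10 * #{y ∈ F | G.Adj x y}) : 4 * #X ≤ #(nbrsIn G F X) := by
  by_contra! hlt
  have hd' : (0 : ℝ) < d := by exact_mod_cast hd
  have hn' : (1000 : ℝ) ≤ n := by exact_mod_cast hn
  have hk : ∀ x ∈ X, (0.3 * d : ℝ) ≤ #{y ∈ nbrsIn G F X | G.Adj x y} := by
    intro x hx
    have h : (3 * d : ℝ) ≤ 10 * #{y ∈ nbrsIn G F X | G.Adj x y} := by
      rw [filter_adj_nbrsIn hx]
      exact_mod_cast hdeg x hx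
    linarith
  have hle := hG.le_of_card_le (by positivity) (by linarith) (card_pos.1 (by omega))
    (c := 2) (by norm_num) (by norm_num; exact_mod_cast hlt.le) hk
  have hdiv : d * (2 ^ 2 * #X : ℝ) / n = d * (4 * #X / n) := by ring
  have hX' : (0.298 : ℝ) ≤ 4 * #X / n :=
    le_of_mul_le_mul_left (by rw [hdiv] at hle; linarith) hd'
  rw [le_div_iff₀ (by linarith)] at hX'
  have : 298 * n ≤ 4000 * #X := by
    have : (298 * n : ℝ) ≤ 4000 * #X := by linarith
    exact_mod_cast this
  omega

lemma IsNDLGraph.le_card_of_forall_le_degree (hG : IsNDLGraph n G d (d / 1000)) (hd : 0 < d)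
    {F : Finset (Fin n)} (hdeg : ∀ x, 3 * d ≤ 10 * #{y ∈ F | G.Adj x y}) :
    299 * n ≤ 1000 * #F := by
  have hd' : (0 : ℝ) < d := by exact_mod_cast hd
  have hn : (0 : ℝ) < n := by exact_mod_cast hG.pos
  have hF : (#F : ℝ) ≤ n := by exact_mod_cast card_finset_fin_le F
  have hk : ∀ x ∈ univ, (0.3 * d : ℝ) ≤ #{y ∈ F | G.Adj x y} := by
    intro x _
    have : (3 * d : ℝ) ≤ 10 * #{y ∈ F | G.Adj x y} := by exact_mod_cast hdeg x
    linarith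
  have hle := hG.mul_card_le (by positivity) (by linarith) hk
  rw [card_univ, Fintype.card_fin] at hle
  have hsqrt : √(n * #F : ℝ) ≤ n := Real.sqrt_le_iff.2 ⟨hn.le, by rw [sq]; gcongr⟩
  have h : (d * (0.3 * n) : ℝ) ≤ d * (#F + n / 1000) :=
    calc (d * (0.3 * n) : ℝ) ≤ d * (n * #F) / n + d / 1000 * √(n * #F) := by linarith
      _ ≤ d * (n * #F) / n + d / 1000 * n := by gcongr
      _ = d * (#F + n / 1000) := by field_simp
  have hF' : (299 * n : ℝ) ≤ 1000 * #F := by linarith [le_of_mul_le_mul_left h hd']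
  exact_mod_cast hF'

end NDLGraph

section LocalLemma

open Finset

variable {Ω ι : Type*} [Fintype Ω] [DecidableEq Ω]

/-- The outcomes that lie in none of the events `E e` with `e ∈ T`. -/
def avoiding (E : ι → Finset Ω) (T : Finset ι) : Finset Ω :=
  {ω | ∀ e ∈ T, ω ∉ E e}

variable {E : ι → Finset Ω}

lemma mem_avoiding {T : Finset ι} {ω : Ω} : ω ∈ avoiding E T ↔ ∀ e ∈ T, ω ∉ E e := by
  simp only [avoiding, mem_filter_univ]

lemma avoiding_anti {S T : Finset ι} (h : S ⊆ T) : avoiding E T ⊆ avoiding E S :=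
  fun _ hω => mem_avoiding.2 fun e he => mem_avoiding.1 hω e (h he)

lemma card_avoiding_sdiff_le [DecidableEq ι] (S U : Finset ι) :
    #(avoiding E (S \ U)) ≤ #(avoiding E S) + ∑ e ∈ S ∩ U, #(E e ∩ avoiding E (S \ U)) := by
  have hcover : avoiding E (S \ U) ⊆
      avoiding E S ∪ (S ∩ U).biUnion fun e => E e ∩ avoiding E (S \ U) := by
    intro ω hω
    by_cases hS : ω ∈ avoiding E S
    · exact mem_union_left _ hS
    obtain ⟨e, he, hωe⟩ : ∃ e ∈ S, ω ∈ E e := by simpa [mem_avoiding] using hS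
    have heU : e ∈ U := by
      by_contra heU
      exact mem_avoiding.1 hω e (mem_sdiff.2 ⟨he, heU⟩) hωe
    exact mem_union_right _ (mem_biUnion.2
      ⟨e, mem_inter.2 ⟨he, heU⟩, mem_inter.2 ⟨hωe, hω⟩⟩)
  calc #(avoiding E (S \ U)) ≤ _ := (card_le_card hcover).trans (card_union_le _ _)
    _ ≤ _ := Nat.add_le_add_left card_biUnion_le _

lemma card_inter_avoiding_le {Γ : ι → Finset ι} {p : ℝ} {D : ℕ} (hp : 0 ≤ p)
    (hΓ : ∀ e, #(Γ e) ≤ D) (hpD : 4 * p * D ≤ 1)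
    (hind : ∀ e T, Disjoint T (Γ e) → (#(E e ∩ avoiding E T) : ℝ) ≤ p * #(avoiding E T))
    (S : Finset ι) (e : ι) : (#(E e ∩ avoiding E S) : ℝ) ≤ 2 * p * #(avoiding E S) := by
  induction S using Finset.strongInduction generalizing e with
  | H S ih =>
  by_cases hdis : Disjoint S (Γ e)
  · linarith [hind e S hdis, show 0 ≤ p * #(avoiding E S) by positivity]
  set T := S \ Γ e
  have hT : T ⊂ S := by
    refine sdiff_subset.ssubset_of_ne fun h => hdis ?_
    exact sdiff_eq_self_iff_disjoint.1 h
  have hloss : ∑ f ∈ S ∩ Γ e, (#(E f ∩ avoiding E T) : ℝ) ≤ D * (2 * p * #(avoiding E T)) :=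
    calc ∑ f ∈ S ∩ Γ e, (#(E f ∩ avoiding E T) : ℝ)
        ≤ #(S ∩ Γ e) * (2 * p * #(avoiding E T)) := by
          rw [← nsmul_eq_mul]
          exact sum_le_card_nsmul _ _ _ fun f _ => ih T hT f
      _ ≤ D * (2 * p * #(avoiding E T)) := by
          gcongr
          exact (card_le_card inter_subset_right).trans (hΓ e)
  have hhalf : (#(avoiding E T) : ℝ) ≤ 2 * #(avoiding E S) := by
    have hsplit : (#(avoiding E T) : ℝ) ≤
        #(avoiding E S) + ∑ f ∈ S ∩ Γ e, (#(E f ∩ avoiding E T) : ℝ) := by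
      exact_mod_cast card_avoiding_sdiff_le S (Γ e)
    nlinarith [mul_le_mul_of_nonneg_right hpD (Nat.cast_nonneg (α := ℝ) #(avoiding E T))]
  calc (#(E e ∩ avoiding E S) : ℝ) ≤ #(E e ∩ avoiding E T) := by
        exact_mod_cast card_le_card (inter_subset_inter_left (avoiding_anti sdiff_subset))
    _ ≤ p * #(avoiding E T) := hind e T sdiff_disjoint
    _ ≤ p * (2 * #(avoiding E S)) := by gcongr
    _ = 2 * p * #(avoiding E S) := by ring

/-- In place of independence, the hypothesis is the bound that independence is used for;
probabilities are proportions of the finite sample space `Ω`. -/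
theorem lovasz_local_lemma [Nonempty Ω] {Γ : ι → Finset ι} {p : ℝ} {D : ℕ} (hp : 0 ≤ p)
    (hD : 1 ≤ D) (hΓ : ∀ e, #(Γ e) ≤ D) (hpD : 4 * p * D ≤ 1)
    (hind : ∀ e T, Disjoint T (Γ e) → (#(E e ∩ avoiding E T) : ℝ) ≤ p * #(avoiding E T))
    (S : Finset ι) : (avoiding E S).Nonempty := by
  induction S using Finset.induction_on with
  | empty => exact ⟨Classical.arbitrary Ω, mem_avoiding.2 (by simp)⟩
  | insert e S he ih =>
    have hsplit := card_avoiding_sdiff_le (E := E) (insert e S) {e}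
    rw [insert_sdiff_of_mem S (mem_singleton_self e), sdiff_singleton_eq_erase,
      erase_eq_of_notMem he, inter_singleton_of_mem (mem_insert_self e S), sum_singleton] at hsplit
    have hsplit' : (#(avoiding E S) : ℝ) ≤ #(avoiding E (insert e S)) + #(E e ∩ avoiding E S) := by
      exact_mod_cast hsplit
    have hhalf : 2 * p * #(avoiding E S) ≤ 1 / 2 * #(avoiding E S) := by
      have : (1 : ℝ) ≤ D := by exact_mod_cast hD
      gcongr
      nlinarith
    have hpos : (0 : ℝ) < #(avoiding E S) := by exact_mod_cast ih.card_pos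
    have hcard := card_inter_avoiding_le hp hΓ hpD hind S e
    exact card_pos.1 (by exact_mod_cast (by linarith : (0 : ℝ) < #(avoiding E (insert e S))))

end LocalLemma

section Colouring

open Finset

variable {V κ : Type*} [DecidableEq V] [Fintype κ]

-- Swapping the colour of `x` with an independent colour is an involution of `(V → κ) × κ`.
lemma card_mul_sum_coloring [Fintype V] (x : V) (w : κ → ℝ) {H : (V → κ) → ℝ}
    (hH : ∀ c i, H (Function.update c x i) = H c) :
    Fintype.card κ * ∑ c : V → κ, w (c x) * H c = (∑ i, w i) * ∑ c, H c := by
  have hinv : Function.Involutive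
      fun q : (V → κ) × κ => (Function.update q.1 x q.2, q.1 x) := by
    rintro ⟨c, i⟩
    simp
  have h := Equiv.sum_comp hinv.toPerm fun q : (V → κ) × κ => w (q.1 x) * H q.1
  simp only [Function.Involutive.coe_toPerm, Function.update_self, hH, Fintype.sum_prod_type,
    ← sum_mul, sum_const, card_univ, nsmul_eq_mul, ← mul_sum] at h
  simp only [h, mul_sum, mul_assoc]

lemma card_pow_mul_sum_coloring [Fintype V] (w : κ → ℝ) (B : Finset V) {H : (V → κ) → ℝ}
    (hH : ∀ x ∈ B, ∀ c i, H (Function.update c x i) = H c) :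
    (Fintype.card κ : ℝ) ^ #B * ∑ c : V → κ, (∏ x ∈ B, w (c x)) * H c
      = (∑ i, w i) ^ #B * ∑ c, H c := by
  induction B using Finset.induction_on with
  | empty => simp
  | insert x B hx ih =>
    have hinsens : ∀ c i, (∏ y ∈ B, w (Function.update c x i y)) * H (Function.update c x i)
        = (∏ y ∈ B, w (c y)) * H c := by
      intro c i
      rw [hH x (mem_insert_self x B)]
      congr 1
      refine prod_congr rfl fun y hy => ?_
      rw [Function.update_of_ne (ne_of_mem_of_not_mem hy hx)]
    have hx_avg := card_mul_sum_coloring x w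
      (H := fun c => (∏ y ∈ B, w (c y)) * H c) hinsens
    have hB_avg := ih fun y hy => hH y (mem_insert_of_mem hy)
    simp only [card_insert_of_notMem hx, prod_insert hx, pow_succ, mul_assoc]
    rw [hx_avg, mul_left_comm, hB_avg]
    ring

variable [DecidableEq κ]

/-- The exponential moment method, for a uniformly random colouring conditioned on `Q`. -/
lemma card_filter_card_le_mul_pow_le [Finite V] {q : ℝ} (hq₀ : 0 < q) (hq₁ : q ≤ 1) (i : κ)
    (B : Finset V) {Q : Finset (V → κ)} (hQ : ∀ x ∈ B, ∀ c j, Function.update c x j ∈ Q ↔ c ∈ Q)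
    (m : ℕ) :
    (Fintype.card κ : ℝ) ^ #B * (#{c ∈ Q | #{x ∈ B | c x = i} ≤ m} * q ^ m)
      ≤ (Fintype.card κ - 1 + q) ^ #B * #Q := by
  cases nonempty_fintype V
  set w : κ → ℝ := fun j => if j = i then q else 1
  have hw₀ (j : κ) : 0 ≤ w j := by
    simp only [w]
    split_ifs <;> linarith
  have hw : ∑ j, w j = Fintype.card κ - 1 + q := by
    have h (j : κ) : w j = 1 + if j = i then q - 1 else 0 := by
      simp only [w]
      split_ifs <;> ring
    simp only [h, sum_add_distrib, sum_const, card_univ, nsmul_eq_mul, mul_one, sum_ite_eq',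
      mem_univ, if_true]
    ring
  have hprod (c : V → κ) : ∏ x ∈ B, w (c x) = q ^ #{x ∈ B | c x = i} := by
    rw [← prod_filter, prod_const]
  have hmean := card_pow_mul_sum_coloring w B (H := fun c => if c ∈ Q then 1 else 0)
    fun x hx c j => by simp only [hQ x hx]
  simp only [hw, mul_ite, mul_one, mul_zero, sum_ite_mem, univ_inter, sum_const,
    nsmul_eq_mul] at hmean
  rw [← hmean, ← nsmul_eq_mul]
  gcongr
  calc #{c ∈ Q | #{x ∈ B | c x = i} ≤ m} • q ^ m
      ≤ ∑ c ∈ Q with #{x ∈ B | c x = i} ≤ m, ∏ x ∈ B, w (c x) := by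
        refine card_nsmul_le_sum _ _ _ fun c hc => ?_
        rw [hprod]
        exact pow_le_pow_of_le_one hq₀.le hq₁ (mem_filter.1 hc).2
    _ ≤ ∑ c ∈ Q, ∏ x ∈ B, w (c x) :=
        sum_le_sum_of_subset_of_nonneg (filter_subset _ _)
          fun c _ _ => prod_nonneg fun x _ => hw₀ _

/-- The base of the exponential tail bound for three colours, obtained from the exponential moment
method by giving one colour the weight `0.99 ^ 10`. -/
noncomputable def tailRate : ℝ :=
  (2 + 0.99 ^ 10) / (3 * 0.99 ^ 3)

lemma card_filter_lt_le_tailRate_pow_mul [Finite V] {d : ℕ} (i : Fin 3) {B : Finset V} (hB : #B = d)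
    {Q : Finset (V → Fin 3)} (hQ : ∀ x ∈ B, ∀ c j, Function.update c x j ∈ Q ↔ c ∈ Q) :
    (#{c ∈ Q | 10 * #{x ∈ B | c x = i} < 3 * d} : ℝ) ≤ tailRate ^ d * #Q := by
  have h := card_filter_card_le_mul_pow_le (q := 0.99 ^ 10) (by positivity) (by norm_num) i B hQ
    (3 * d / 10)
  rw [Fintype.card_fin, hB] at h
  have hsub : #{c ∈ Q | 10 * #{x ∈ B | c x = i} < 3 * d} ≤
      #{c ∈ Q | #{x ∈ B | c x = i} ≤ 3 * d / 10} :=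
    card_le_card (monotone_filter_right Q fun c _ hc => by omega)
  have hpow : (0.99 : ℝ) ^ (3 * d) ≤ (0.99 ^ 10) ^ (3 * d / 10) := by
    rw [← pow_mul]
    exact pow_le_pow_of_le_one (by norm_num) (by norm_num) (Nat.mul_div_le _ _)
  rw [tailRate, div_pow, mul_pow, ← pow_mul, div_mul_eq_mul_div, le_div_iff₀ (by positivity)]
  calc #{c ∈ Q | 10 * #{x ∈ B | c x = i} < 3 * d} * ((3 : ℝ) ^ d * 0.99 ^ (3 * d))
      ≤ #{c ∈ Q | #{x ∈ B | c x = i} ≤ 3 * d / 10} * (3 ^ d * (0.99 ^ 10) ^ (3 * d / 10)) := by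
        gcongr
    _ = (3 : ℕ) ^ d *
          (#{c ∈ Q | #{x ∈ B | c x = i} ≤ 3 * d / 10} * (0.99 ^ 10) ^ (3 * d / 10)) := by
        push_cast; ring
    _ ≤ ((3 : ℕ) - 1 + 0.99 ^ 10) ^ d * #Q := h
    _ = (2 + 0.99 ^ 10) ^ d * #Q := by norm_num

lemma eventually_tailRate_pow_mul_le :
    ∀ᶠ d : ℕ in Filter.atTop, 4 * tailRate ^ d * ((3 * d ^ 2 : ℕ) : ℝ) ≤ 1 := by
  have hlt : |tailRate| < 1 := by
    rw [tailRate]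
    norm_num [abs_lt]
  filter_upwards [(tendsto_pow_const_mul_const_pow_of_abs_lt_one 2 hlt).eventually
    (ge_mem_nhds (show (0 : ℝ) < 1 / 12 by norm_num))] with d hd
  push_cast
  linarith

end Colouring

section BalancedColouring

open Finset

variable {V : Type*} [Fintype V]

/-- In the colouring `col`, every vertex has at least `3 * d / 10` neighbours of each colour. -/
def IsBalancedColouring (G : SimpleGraph V) (d : ℕ) (col : V → Fin 3) : Prop :=
  ∀ v i, 3 * d ≤ 10 * #{x | G.Adj v x ∧ col x = i}

/-- The colourings that give the vertex `e.1` too few neighbours of colour `e.2`. -/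
noncomputable def unbalancedAt (G : SimpleGraph V) (d : ℕ) (e : V × Fin 3) :
    Finset (V → Fin 3) :=
  {c | 10 * #{x ∈ G.neighborFinset e.1 | c x = e.2} < 3 * d}

lemma isBalancedColouring_of_mem_avoiding {G : SimpleGraph V} {d : ℕ} {col : V → Fin 3}
    (h : col ∈ avoiding (unbalancedAt G d) univ) : IsBalancedColouring G d col := by
  intro v i
  have hvi := mem_avoiding.1 h (v, i) (mem_univ _)
  rw [unbalancedAt, mem_filter_univ, not_lt, G.neighborFinset_eq_filter, filter_filter] at hvi
  convert hvi

lemma update_mem_avoiding_unbalancedAt [DecidableEq V] {G : SimpleGraph V} {d : ℕ}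
    {T : Finset (V × Fin 3)} {x : V} (hx : ∀ e ∈ T, ¬G.Adj e.1 x) (c : V → Fin 3) (j : Fin 3) :
    Function.update c x j ∈ avoiding (unbalancedAt G d) T ↔ c ∈ avoiding (unbalancedAt G d) T := by
  simp only [mem_avoiding, unbalancedAt, mem_filter_univ]
  refine forall₂_congr fun e he => ?_
  have hfilter : {y ∈ G.neighborFinset e.1 | Function.update c x j y = e.2} =
      {y ∈ G.neighborFinset e.1 | c y = e.2} := by
    refine filter_congr fun y hy => ?_
    rw [Function.update_of_ne]
    rintro rfl
    exact hx e he ((G.mem_neighborFinset _ _).1 hy)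
  rw [hfilter]

theorem exists_isBalancedColouring {G : SimpleGraph V} {d : ℕ} (hd : 1 ≤ d)
    (hG : G.IsRegularOfDegree d) (hthr : 4 * tailRate ^ d * ((3 * d ^ 2 : ℕ) : ℝ) ≤ 1) :
    ∃ col, IsBalancedColouring G d col := by
  set Γ : V × Fin 3 → Finset (V × Fin 3) := fun e =>
    (G.neighborFinset e.1).biUnion (fun x => G.neighborFinset x) ×ˢ univ
  have hΓ (e : V × Fin 3) : #(Γ e) ≤ 3 * d ^ 2 := by
    have : #((G.neighborFinset e.1).biUnion (fun x => G.neighborFinset x)) ≤ d * d :=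
      (card_biUnion_le_card_mul _ _ d fun x _ => (hG x).le).trans_eq (by
        rw [G.card_neighborFinset_eq_degree, hG])
    rw [card_product, card_univ, Fintype.card_fin]
    nlinarith
  have hind (e : V × Fin 3) (T : Finset (V × Fin 3)) (hT : Disjoint T (Γ e)) :
      (#(unbalancedAt G d e ∩ avoiding (unbalancedAt G d) T) : ℝ) ≤
        tailRate ^ d * #(avoiding (unbalancedAt G d) T) := by
    rw [inter_comm, unbalancedAt, inter_filter, inter_univ]
    refine card_filter_lt_le_tailRate_pow_mul e.2 (hG e.1) fun x hx =>
      update_mem_avoiding_unbalancedAt fun f hf hfx => disjoint_left.1 hT hf ?_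
    exact mem_product.2 ⟨mem_biUnion.2 ⟨x, hx, (G.mem_neighborFinset _ _).2 hfx.symm⟩, mem_univ _⟩
  have hrate : 0 ≤ tailRate ^ d := by
    rw [tailRate]
    positivity
  obtain ⟨col, hcol⟩ := lovasz_local_lemma hrate (by nlinarith) hΓ hthr hind univ
  exact ⟨col, isBalancedColouring_of_mem_avoiding hcol⟩

end BalancedColouring

section ParentForest

open Finset

/-- A forest grown by attaching leaves to a set of roots, recorded by the set `verts` of its
non-root vertices and the parent of each of them. The values of `parent` outside `verts` carry no
meaning. -/
structure ParentForest (V : Type*) where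
  verts : Finset V
  parent : V → V

namespace ParentForest

variable {V : Type*}

/-- `F ≤ F'` if the forest `F'` is obtained from `F` by adding vertices. -/
instance : Preorder (ParentForest V) where
  le F F' := F.verts ⊆ F'.verts ∧ ∀ y ∈ F.verts, F'.parent y = F.parent y
  le_refl _ := ⟨subset_rfl, fun _ _ => rfl⟩
  le_trans _ _ _ h h' :=
    ⟨h.1.trans h'.1, fun y hy => (h'.2 y (h.1 hy)).trans (h.2 y hy)⟩

/-- The subforest of `F` on the vertex set `Z`. -/
def restrict (F : ParentForest V) (Z : Finset V) : ParentForest V :=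
  ⟨Z, F.parent⟩

variable [DecidableEq V]

/-- The children of `v` in the forest `F`. -/
def children (F : ParentForest V) (v : V) : Finset V :=
  {y ∈ F.verts | F.parent y = v}

/-- The forest `F` with `y` attached to `v` as a new leaf. -/
def attach (F : ParentForest V) (v y : V) : ParentForest V :=
  ⟨insert y F.verts, Function.update F.parent y v⟩

variable {F F' : ParentForest V} {v y : V}

lemma mem_children {w : V} : w ∈ F.children v ↔ w ∈ F.verts ∧ F.parent w = v :=
  mem_filter

lemma parent_attach_of_mem {z : V} (hy : y ∉ F.verts) (hz : z ∈ F.verts) :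
    (F.attach v y).parent z = F.parent z :=
  Function.update_of_ne (ne_of_mem_of_not_mem hz hy) _ _

lemma parent_attach_self : (F.attach v y).parent y = v :=
  Function.update_self _ _ _

lemma le_attach (hy : y ∉ F.verts) : F ≤ F.attach v y :=
  ⟨subset_insert _ _, fun _ => parent_attach_of_mem hy⟩

lemma card_children_attach (hy : y ∉ F.verts) (w : V) :
    #((F.attach v y).children w) = #(F.children w) + if w = v then 1 else 0 := by
  have hold : {z ∈ F.verts | (F.attach v y).parent z = w} = F.children w :=
    filter_congr fun z hz => by rw [parent_attach_of_mem hy hz]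
  rw [children, show (F.attach v y).verts = insert y F.verts from rfl, filter_insert, hold,
    parent_attach_self]
  rcases eq_or_ne w v with rfl | hw
  · rw [if_pos rfl, if_pos rfl, card_insert_of_notMem fun h => hy (mem_children.1 h).1]
  · rw [if_neg hw.symm, if_neg hw, add_zero]

lemma children_subset_of_le (h : F ≤ F') (v : V) : F.children v ⊆ F'.children v := fun y hy => by
  rw [mem_children] at hy ⊢
  exact ⟨h.1 hy.1, (h.2 y hy.1).trans hy.2⟩

lemma children_eq_of_le (h : F ≤ F')
    (hnew : ∀ y ∈ F'.verts, y ∉ F.verts → F'.parent y ≠ v) : F'.children v = F.children v := by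
  refine Subset.antisymm (fun y hy => ?_) (children_subset_of_le h v)
  rw [mem_children] at hy ⊢
  have hyF : y ∈ F.verts := by
    by_contra hyF
    exact hnew y hy.1 hyF hy.2
  exact ⟨hyF, (h.2 y hyF).symm.trans hy.2⟩

end ParentForest

end ParentForest

section Extendable

open Finset ParentForest

variable {V : Type*} [DecidableEq V] {G : SimpleGraph V} {D s : ℕ} {R U : Finset V}
  {F : ParentForest V} {v y : V}

/-- The vertices of `R` that `U` can use as children: those already attached to a member of `U`
and those still free and adjacent to one. -/
noncomputable def reach (G : SimpleGraph V) (R : Finset V) (F : ParentForest V) (U : Finset V) :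
    Finset V :=
  {y ∈ R | ∃ u ∈ U, if y ∈ F.verts then F.parent y = u else G.Adj u y}

/-- The forest `F`, grown inside the reservoir `R`, is `(D, 2s)`-extendable: every set of at most
`2s` vertices reaches at least `D` times as many vertices of `R`. -/
structure IsExtendable (G : SimpleGraph V) (D s : ℕ) (R : Finset V) (F : ParentForest V) :
    Prop where
  subset : F.verts ⊆ R
  adj_parent : ∀ y ∈ F.verts, G.Adj (F.parent y) y
  parent_notMem : ∀ y ∈ F.verts, F.parent y ∉ R \ F.verts
  expands : ∀ U : Finset V, #U ≤ 2 * s → D * #U ≤ #(reach G R F U)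

/-- A set of at most `2s` vertices that reaches no more vertices than extendability requires. -/
def IsCritical (G : SimpleGraph V) (D s : ℕ) (R : Finset V) (F : ParentForest V)
    (U : Finset V) : Prop :=
  #U ≤ 2 * s ∧ #(reach G R F U) ≤ D * #U

lemma mem_reach :
    y ∈ reach G R F U ↔ y ∈ R ∧ ∃ u ∈ U, if y ∈ F.verts then F.parent y = u else G.Adj u y :=
  mem_filter

lemma reach_union (A B : Finset V) :
    reach G R F (A ∪ B) = reach G R F A ∪ reach G R F B := by
  ext y
  simp only [mem_union, mem_reach, or_and_right, exists_or, and_or_left]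

lemma reach_mono {A B : Finset V} (h : A ⊆ B) : reach G R F A ⊆ reach G R F B := fun y hy => by
  obtain ⟨hyR, u, hu, huy⟩ := mem_reach.1 hy
  exact mem_reach.2 ⟨hyR, u, h hu, huy⟩

lemma nbrsIn_subset_reach : nbrsIn G (R \ F.verts) U ⊆ reach G R F U := fun y hy => by
  obtain ⟨hy, u, hu, huy⟩ := mem_nbrsIn.1 hy
  obtain ⟨hyR, hyF⟩ := mem_sdiff.1 hy
  exact mem_reach.2 ⟨hyR, u, hu, by rwa [if_neg hyF]⟩

lemma reach_insert_subset (hU : nbrsIn G (R \ F.verts) {v} ⊆ reach G R F U) :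
    reach G R F (insert v U) ⊆ F.children v ∪ reach G R F U := by
  rw [insert_eq, reach_union]
  refine union_subset (fun y hy => ?_) subset_union_right
  obtain ⟨hyR, u, hu, huy⟩ := mem_reach.1 hy
  obtain rfl := mem_singleton.1 hu
  split_ifs at huy with hyF
  · exact mem_union_left _ (mem_children.2 ⟨hyF, huy⟩)
  · exact mem_union_right _ (hU (mem_nbrsIn.2 ⟨mem_sdiff.2 ⟨hyR, hyF⟩, u, hu, huy⟩))

lemma reach_subset_reach_restrict {Z : Finset V} (hZ : Z ⊆ F.verts)
    (hadj : ∀ y ∈ F.verts, G.Adj (F.parent y) y) :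
    reach G R F U ⊆ reach G R (F.restrict Z) U := fun y hy => by
  obtain ⟨hyR, u, hu, huy⟩ := mem_reach.1 hy
  refine mem_reach.2 ⟨hyR, u, hu, ?_⟩
  change if y ∈ Z then F.parent y = u else G.Adj u y
  split_ifs with hyZ
  · rwa [if_pos (hZ hyZ)] at huy
  · split_ifs at huy with hyF
    · exact huy ▸ hadj y hyF
    · exact huy

lemma mem_reach_attach {z : V} (hy : y ∉ F.verts) (hz : z ∈ reach G R F U)
    (hzy : z ≠ y ∨ v ∈ U) : z ∈ reach G R (F.attach v y) U := by
  obtain ⟨hzR, u, hu, huz⟩ := mem_reach.1 hz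
  refine mem_reach.2 ⟨hzR, ?_⟩
  rcases eq_or_ne z y with rfl | hne
  · exact ⟨v, hzy.resolve_left (not_not_intro rfl), by simp [ParentForest.attach]⟩
  · exact ⟨u, hu, by simpa [ParentForest.attach, hne] using huz⟩

lemma IsExtendable.restrict (h : IsExtendable G D s R F) {Z : Finset V} (hZ : Z ⊆ F.verts)
    (hpar : ∀ z ∈ Z, F.parent z ∉ R \ Z) : IsExtendable G D s R (F.restrict Z) where
  subset := hZ.trans h.subset
  adj_parent y hy := h.adj_parent y (hZ hy)
  parent_notMem := hpar
  expands U hU :=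
    (h.expands U hU).trans (card_le_card (reach_subset_reach_restrict hZ h.adj_parent))

lemma IsCritical.card_lt (hJ : IsJoined G s) (hroom : (2 * D + 1) * s ≤ #(R \ F.verts))
    (hU : IsCritical G D s R F U) : #U < s := by
  by_contra! hsU
  set N := nbrsIn G (R \ F.verts) U
  have hnon : #((R \ F.verts) \ N) < s := by
    by_contra! hlarge
    obtain ⟨u, hu, y, hy, huy⟩ := hJ hsU hlarge
    obtain ⟨hyF, hyN⟩ := mem_sdiff.1 hy
    exact hyN (mem_nbrsIn.2 ⟨hyF, u, hu, huy⟩)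
  have hN : #N ≤ 2 * D * s :=
    calc #N ≤ #(reach G R F U) := card_le_card nbrsIn_subset_reach
      _ ≤ D * #U := hU.2
      _ ≤ D * (2 * s) := Nat.mul_le_mul_left D hU.1
      _ = 2 * D * s := by ring
  have hsplit : #((R \ F.verts) \ N) + #N = #(R \ F.verts) :=
    card_sdiff_add_card_eq_card (filter_subset _ _)
  rw [add_mul, one_mul] at hroom
  omega

-- The number of reached vertices is submodular, so criticality passes to unions.
lemma IsCritical.union (h : IsExtendable G D s R F) (hJ : IsJoined G s)
    (hroom : (2 * D + 1) * s ≤ #(R \ F.verts)) {A B : Finset V} (hA : IsCritical G D s R F A)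
    (hB : IsCritical G D s R F B) : IsCritical G D s R F (A ∪ B) := by
  have hAs := hA.card_lt hJ hroom
  have hBs := hB.card_lt hJ hroom
  have hcard := card_union_add_card_inter A B
  refine ⟨by omega, ?_⟩
  have hinter : D * #(A ∩ B) ≤ #(reach G R F A ∩ reach G R F B) :=
    (h.expands _ (by omega)).trans (card_le_card
      (subset_inter (reach_mono inter_subset_left) (reach_mono inter_subset_right)))
  have hreach := card_union_add_card_inter (reach G R F A) (reach G R F B)
  rw [← reach_union] at hreach
  have hD : D * #(A ∪ B) + D * #(A ∩ B) = D * #A + D * #B := by rw [← mul_add, hcard, mul_add]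
  have := hA.2
  have := hB.2
  omega

lemma exists_isCritical_subset_reach (h : IsExtendable G D s R F) (hJ : IsJoined G s)
    (hroom : (2 * D + 1) * s ≤ #(R \ F.verts)) {T : Finset V}
    (hT : ∀ y ∈ T, ∃ U, IsCritical G D s R F U ∧ v ∉ U ∧ y ∈ reach G R F U) :
    ∃ U, IsCritical G D s R F U ∧ v ∉ U ∧ T ⊆ reach G R F U := by
  induction T using Finset.induction_on with
  | empty => exact ⟨∅, by simp [IsCritical, reach], notMem_empty v, empty_subset _⟩
  | insert y T _ ih =>
    obtain ⟨A, hA, hvA, hTA⟩ := ih fun z hz => hT z (mem_insert_of_mem hz)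
    obtain ⟨B, hB, hvB, hyB⟩ := hT y (mem_insert_self y T)
    refine ⟨A ∪ B, hA.union h hJ hroom hB, notMem_union.2 ⟨hvA, hvB⟩, ?_⟩
    rw [reach_union]
    exact insert_subset (mem_union_right _ hyB) (hTA.trans subset_union_left)

lemma IsExtendable.attach (h : IsExtendable G D s R F) (hv : v ∉ R \ F.verts)
    (hy : y ∈ R \ F.verts) (hvy : G.Adj v y)
    (hcrit : ∀ U, IsCritical G D s R F U → v ∉ U → y ∉ reach G R F U) :
    IsExtendable G D s R (F.attach v y) := by
  obtain ⟨hyR, hyF⟩ := mem_sdiff.1 hy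
  have hsub : R \ (F.attach v y).verts ⊆ R \ F.verts :=
    sdiff_subset_sdiff subset_rfl (le_attach hyF).1
  refine ⟨insert_subset hyR h.subset, fun z hz => ?_, fun z hz => ?_, fun U hU => ?_⟩
  · obtain rfl | hz := mem_insert.1 hz
    · rwa [parent_attach_self]
    · exact parent_attach_of_mem hyF hz ▸ h.adj_parent z hz
  · obtain rfl | hz := mem_insert.1 hz
    · exact parent_attach_self (F := F) ▸ fun hv' => hv (hsub hv')
    · exact parent_attach_of_mem hyF hz ▸ fun hz' => h.parent_notMem z hz (hsub hz')
  · by_cases hyU : y ∈ reach G R F U ∧ v ∉ U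
    · have hlt : D * #U < #(reach G R F U) := by
        by_contra! hle
        exact hcrit U ⟨hU, hle⟩ hyU.2 hyU.1
      calc D * #U ≤ #(reach G R F U) - 1 := Nat.le_sub_one_of_lt hlt
        _ = #((reach G R F U).erase y) := (card_erase_of_mem hyU.1).symm
        _ ≤ #(reach G R (F.attach v y) U) := card_le_card fun z hz =>
          mem_reach_attach hyF (mem_of_mem_erase hz) (Or.inl (ne_of_mem_erase hz))
    · refine (h.expands U hU).trans (card_le_card fun z hz => mem_reach_attach hyF hz ?_)
      by_cases hvU : v ∈ U
      · exact Or.inr hvU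
      · exact Or.inl fun hzy => hyU ⟨hzy ▸ hz, hvU⟩

/-- One step of the Friedman–Pippenger tree embedding theorem. If no choice of `y` worked, each
would be blocked by a critical set avoiding `v`, and the union of these sets with `v` added would
reach too few vertices. -/
theorem IsExtendable.exists_attach (h : IsExtendable G D s R F) (hJ : IsJoined G s)
    (hroom : (2 * D + 1) * s + #F.verts ≤ #R) (hv : v ∉ R \ F.verts) (hvD : #(F.children v) < D) :
    ∃ y ∈ R \ F.verts, G.Adj v y ∧ IsExtendable G D s R (F.attach v y) := by
  have hfree : (2 * D + 1) * s ≤ #(R \ F.verts) := by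
    rw [card_sdiff_of_subset h.subset]
    omega
  by_contra! hnone
  obtain ⟨U, hU, hvU, hreach⟩ := exists_isCritical_subset_reach (v := v) h hJ hfree
    (T := nbrsIn G (R \ F.verts) {v}) fun y hy => by
      obtain ⟨hyF, u, hu, huy⟩ := mem_nbrsIn.1 hy
      obtain rfl := mem_singleton.1 hu
      by_contra! hcrit
      exact hnone y hyF huy (h.attach hv hyF huy hcrit)
  have hUs := hU.card_lt hJ hfree
  have hins : #(insert v U) = #U + 1 := card_insert_of_notMem hvU
  have hcard : D * (#U + 1) ≤ #(F.children v) + #(reach G R F U) :=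
    calc D * (#U + 1) ≤ #(reach G R F (insert v U)) := hins ▸ h.expands _ (by omega)
      _ ≤ #(F.children v ∪ reach G R F U) := card_le_card (reach_insert_subset hreach)
      _ ≤ _ := card_union_le _ _
  have := hU.2
  rw [mul_add, mul_one] at hcard
  omega

end Extendable

section Growing

open Finset ParentForest

variable {V : Type*} {G : SimpleGraph V} {F F₁ F' : ParentForest V} {a b y z : V} {Z : List V}

/-- The list `Z` consists of vertices of `F'` not in `F`, each of them the parent of the next; the
first one is a child of `a` and the last one is `b`. The empty branch has `b = a`. -/
structure IsBranch (F F' : ParentForest V) (a : V) (Z : List V) (b : V) : Prop where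
  nodup : Z.Nodup
  mem_verts : ∀ z ∈ Z, z ∈ F'.verts
  notMem_verts : ∀ z ∈ Z, z ∉ F.verts
  isChain : (a :: Z).IsChain fun u v => F'.parent v = u
  getLast?_eq : (a :: Z).getLast? = some b

lemma IsBranch.nil : IsBranch F F' a [] a := by
  constructor <;> simp

lemma IsBranch.cons (hF : F ≤ F₁) (hF' : F₁ ≤ F') (hy : y ∈ F₁.verts) (hyF : y ∉ F.verts)
    (hya : F₁.parent y = a) (h : IsBranch F₁ F' y Z b) : IsBranch F F' a (y :: Z) b where
  nodup := List.nodup_cons.2 ⟨fun hyZ => h.notMem_verts y hyZ hy, h.nodup⟩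
  mem_verts := List.forall_mem_cons.2 ⟨hF'.1 hy, h.mem_verts⟩
  notMem_verts := List.forall_mem_cons.2 ⟨hyF, fun z hz hzF => h.notMem_verts z hz (hF.1 hzF)⟩
  isChain := List.isChain_cons_cons.2 ⟨(hF'.2 y hy).trans hya, h.isChain⟩
  getLast?_eq := List.getLast?_cons_cons.trans h.getLast?_eq

lemma IsBranch.mono_right (h : IsBranch F F₁ a Z b) (hF : F₁ ≤ F') : IsBranch F F' a Z b where
  nodup := h.nodup
  mem_verts z hz := hF.1 (h.mem_verts z hz)
  notMem_verts := h.notMem_verts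
  isChain := h.isChain.imp_of_mem_tail_imp fun _ v _ hv => ((hF.2 v (h.mem_verts v hv)).trans ·)
  getLast?_eq := h.getLast?_eq

lemma IsBranch.parent_mem (h : IsBranch F F' a Z b) (hz : z ∈ Z) : F'.parent z ∈ a :: Z := by
  have hchain := h.isChain
  clear h
  induction Z generalizing a with
  | nil => exact absurd hz List.not_mem_nil
  | cons y Z ih =>
    obtain ⟨hya, hchain⟩ := List.isChain_cons_cons.1 hchain
    obtain rfl | hz := List.mem_cons.1 hz
    · exact hya ▸ List.mem_cons_self
    · exact List.mem_cons_of_mem a (ih hz hchain)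

lemma IsBranch.isChain_adj (h : IsBranch F F' a Z b)
    (hadj : ∀ y ∈ F'.verts, G.Adj (F'.parent y) y) : (a :: Z).IsChain G.Adj :=
  h.isChain.imp_of_mem_tail_imp fun u v _ hv huv => by
    obtain rfl : F'.parent v = u := huv
    exact hadj v (h.mem_verts v hv)

/-- The forest `F'` is obtained from `F` by growing disjoint complete binary trees of depth `ℓ` at
the vertices of `A`; the leaves of these trees form the set `L`. -/
structure IsBinaryGrowth [DecidableEq V] (R : Finset V) (F F' : ParentForest V) (A L : Finset V)
    (ℓ : ℕ) : Prop where
  le : F ≤ F'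
  card_verts : #F'.verts + 2 * #A = #F.verts + 2 ^ (ℓ + 1) * #A
  card_leaves : #L = 2 ^ ℓ * #A
  card_children_le : ∀ v ∉ R \ F.verts,
    #(F'.children v) ≤ #(F.children v) + if v ∈ A then 2 else 0
  exists_isBranch : ∀ b ∈ L, ∃ a ∈ A, ∃ Z : List V, Z.length = ℓ ∧ IsBranch F F' a Z b

variable [DecidableEq V] {D s ℓ : ℕ} {R A L : Finset V}

lemma notMem_sdiff_verts_of_le (hF : F ≤ F') (ha : a ∉ R \ F.verts) : a ∉ R \ F'.verts :=
  fun ha' => ha (sdiff_subset_sdiff subset_rfl hF.1 ha')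

lemma IsExtendable.children_eq_empty (h : IsExtendable G D s R F) (hy : y ∈ R \ F.verts) :
    F.children y = ∅ :=
  eq_empty_of_forall_notMem fun z hz =>
    h.parent_notMem z (mem_children.1 hz).1 ((mem_children.1 hz).2 ▸ hy)

lemma IsExtendable.exists_attach_multiset (h : IsExtendable G D s R F) (hJ : IsJoined G s)
    (M : Multiset V) (hM : ∀ v ∈ M, v ∉ R \ F.verts)
    (hchild : ∀ v ∈ M, #(F.children v) + M.count v ≤ D)
    (hroom : (2 * D + 1) * s + #F.verts + M.card ≤ #R) :
    ∃ F', F ≤ F' ∧ IsExtendable G D s R F' ∧ #F'.verts = #F.verts + M.card ∧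
      (∀ y ∈ F'.verts, y ∉ F.verts → F'.parent y ∈ M) ∧
      ∀ v, #(F'.children v) = #(F.children v) + M.count v := by
  induction M using Multiset.induction generalizing F with
  | empty => exact ⟨F, le_rfl, h, by simp, fun y hy hyF => absurd hy hyF, by simp⟩
  | cons a M ih =>
    rw [Multiset.card_cons] at hroom
    have haD := hchild a (Multiset.mem_cons_self a M)
    rw [Multiset.count_cons_self] at haD
    obtain ⟨y, hy, -, h₁⟩ :=
      h.exists_attach hJ (by omega) (hM a (Multiset.mem_cons_self a M)) (by omega)
    have hyF := (mem_sdiff.1 hy).2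
    have hle := le_attach (v := a) hyF
    have hcard : #(F.attach a y).verts = #F.verts + 1 := card_insert_of_notMem hyF
    have hcount : ∀ v, #((F.attach a y).children v) + M.count v =
        #(F.children v) + (a ::ₘ M).count v := fun v => by
      rw [card_children_attach hyF, Multiset.count_cons, add_assoc, add_comm (M.count v)]
    obtain ⟨F', hF', h', hcard', hparent, hchildren⟩ := ih h₁
      (fun v hv => notMem_sdiff_verts_of_le hle (hM v (Multiset.mem_cons_of_mem hv)))
      (fun v hv => hcount v ▸ hchild v (Multiset.mem_cons_of_mem hv)) (by omega)
    refine ⟨F', hle.trans hF', h', by rw [hcard', hcard, Multiset.card_cons]; ring,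
      fun z hz hzF => ?_, fun v => (hchildren v).trans (hcount v)⟩
    rcases eq_or_ne z y with rfl | hzy
    · rw [hF'.2 z (mem_insert_self z _), parent_attach_self]
      exact Multiset.mem_cons_self a M
    · exact Multiset.mem_cons_of_mem (hparent z hz fun hz₁ =>
        (mem_insert.1 hz₁).elim hzy hzF)

lemma IsBinaryGrowth.zero : IsBinaryGrowth R F F A A 0 where
  le := le_rfl
  card_verts := by ring
  card_leaves := by ring
  card_children_le _ _ := Nat.le_add_right _ _
  exists_isBranch b hb := ⟨b, hb, [], rfl, .nil⟩

lemma IsBinaryGrowth.succ (hF : F ≤ F₁) (hF₁ : F₁.verts ⊆ R)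
    (hcard : #F₁.verts = #F.verts + 2 * #A)
    (hparent : ∀ y ∈ F₁.verts, y ∉ F.verts → F₁.parent y ∈ A)
    (hchildren : ∀ v, #(F₁.children v) = #(F.children v) + if v ∈ A then 2 else 0)
    (h : IsBinaryGrowth R F₁ F' (F₁.verts \ F.verts) L ℓ) :
    IsBinaryGrowth R F F' A L (ℓ + 1) := by
  have hnew : #(F₁.verts \ F.verts) = 2 * #A := by
    rw [card_sdiff_of_subset hF.1]
    omega
  have hverts := h.card_verts
  have hleaves := h.card_leaves
  rw [hnew] at hverts hleaves
  refine ⟨hF.trans h.le, ?_, hleaves.trans (by ring), fun v hv => ?_, fun b hb => ?_⟩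
  · rw [pow_succ 2 (ℓ + 1), mul_assoc]
    omega
  · have hvnew : v ∉ F₁.verts \ F.verts := fun hv' => hv (sdiff_subset_sdiff hF₁ subset_rfl hv')
    have hle := h.card_children_le v (notMem_sdiff_verts_of_le hF hv)
    rwa [if_neg hvnew, add_zero, hchildren] at hle
  · obtain ⟨y, hy, Z, hZ, hbranch⟩ := h.exists_isBranch b hb
    obtain ⟨hy₁, hyF⟩ := mem_sdiff.1 hy
    exact ⟨F₁.parent y, hparent y hy₁ hyF, y :: Z, congrArg Nat.succ hZ,
      hbranch.cons hF h.le hy₁ hyF rfl⟩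

lemma IsExtendable.exists_attach_two (h : IsExtendable G D s R F) (hJ : IsJoined G s)
    (hA : ∀ a ∈ A, a ∉ R \ F.verts) (hchild : ∀ a ∈ A, #(F.children a) + 2 ≤ D)
    (hroom : (2 * D + 1) * s + #F.verts + 2 * #A ≤ #R) :
    ∃ F', F ≤ F' ∧ IsExtendable G D s R F' ∧ #F'.verts = #F.verts + 2 * #A ∧
      (∀ y ∈ F'.verts, y ∉ F.verts → F'.parent y ∈ A) ∧
      ∀ v, #(F'.children v) = #(F.children v) + if v ∈ A then 2 else 0 := by
  have hmem : ∀ v, v ∈ 2 • A.val ↔ v ∈ A := fun v => by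
    rw [Multiset.mem_nsmul_of_ne_zero two_ne_zero, mem_val]
  have hcount : ∀ v, (2 • A.val).count v = if v ∈ A then 2 else 0 := fun v => by
    rw [Multiset.count_nsmul, Multiset.count_eq_of_nodup A.nodup, mul_ite, mul_one, mul_zero]
    rfl
  have hsize : (2 • A.val).card = 2 * #A := Multiset.card_nsmul _ _
  simpa only [hmem, hcount, hsize] using h.exists_attach_multiset hJ (2 • A.val)
    (fun v hv => hA v ((hmem v).1 hv))
    (fun v hv => by rw [hcount, if_pos ((hmem v).1 hv)]; exact hchild v ((hmem v).1 hv))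
    (by rwa [hsize])

lemma IsExtendable.exists_isBinaryGrowth (h : IsExtendable G D s R F) (hJ : IsJoined G s)
    (hD : 2 ≤ D) (ℓ : ℕ) (hA : ∀ a ∈ A, a ∉ R \ F.verts)
    (hchild : ∀ a ∈ A, #(F.children a) + 2 ≤ D)
    (hroom : (2 * D + 1) * s + #F.verts + 2 ^ (ℓ + 1) * #A ≤ #R + 2 * #A) :
    ∃ F' L, IsExtendable G D s R F' ∧ IsBinaryGrowth R F F' A L ℓ := by
  induction ℓ generalizing F A with
  | zero => exact ⟨F, A, h, .zero⟩
  | succ ℓ ih =>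
    have hpow : 2 ≤ 2 ^ (ℓ + 1) := Nat.le_self_pow (Nat.succ_ne_zero ℓ) 2
    have hlevel : 2 ^ (ℓ + 1 + 1) * #A = 2 ^ (ℓ + 1) * (2 * #A) := by ring
    have hlevel_le := Nat.mul_le_mul_right (2 * #A) hpow
    obtain ⟨F₁, hF, h₁, hcard, hparent, hchildren⟩ :=
      h.exists_attach_two hJ hA hchild (by omega)
    have hnew : #(F₁.verts \ F.verts) = 2 * #A := by
      rw [card_sdiff_of_subset hF.1]
      omega
    have hempty : ∀ y ∈ F₁.verts \ F.verts, #(F₁.children y) = 0 := fun y hy => by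
      have hyR : y ∈ R \ F.verts := sdiff_subset_sdiff h₁.subset subset_rfl hy
      rw [hchildren, h.children_eq_empty hyR, if_neg fun hyA => hA y hyA hyR, card_empty]
    obtain ⟨F', L, h', hgrowth⟩ := ih h₁
      (fun y hy hyR => (mem_sdiff.1 hyR).2 (mem_sdiff.1 hy).1)
      (fun y hy => by rw [hempty y hy]; omega) (by rw [hnew]; omega)
    exact ⟨F', L, h', hgrowth.succ hF h₁.subset hcard hparent hchildren⟩

end Growing

section Linking

open Finset ParentForest

variable {V : Type*} {G : SimpleGraph V} {D s ℓ : ℕ} {R A B : Finset V}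
  {F F₁ F₂ F' : ParentForest V} {a b x y : V} {Z ZA ZB : List V}

lemma isChain_adj_append_reverse (hA : (a :: ZA).IsChain G.Adj)
    (hx : (a :: ZA).getLast? = some x) (hB : (b :: ZB).IsChain G.Adj)
    (hy : (b :: ZB).getLast? = some y) (hxy : G.Adj x y) :
    (a :: (ZA ++ ZB.reverse ++ [b])).IsChain G.Adj := by
  rw [List.append_assoc, ← List.reverse_cons, ← List.cons_append]
  refine List.isChain_append.2 ⟨hA, ?_, fun u hu v hv => ?_⟩
  · exact List.isChain_reverse.2 (hB.imp fun _ _ h => h.symm)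
  · rw [hx] at hu
    rw [List.head?_reverse, hy] at hv
    obtain rfl := Option.some_injective _ hu
    obtain rfl := Option.some_injective _ hv
    exact hxy

variable [DecidableEq V]

/-- The extendable forest `F'` is obtained from `F` by adding the inner vertices `Z` of a path in
`G` from `a` to `b`. -/
structure IsLink (G : SimpleGraph V) (D s : ℕ) (R : Finset V) (F F' : ParentForest V) (a : V)
    (Z : List V) (b : V) : Prop where
  isExtendable : IsExtendable G D s R F'
  verts_eq : F'.verts = F.verts ∪ Z.toFinset
  nodup : Z.Nodup
  mem_sdiff : ∀ z ∈ Z, z ∈ R \ F.verts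
  isChain : (a :: (Z ++ [b])).IsChain G.Adj
  card_children_le : ∀ v ∉ R \ F.verts,
    #(F'.children v) ≤ #(F.children v) + if v = a ∨ v = b then 2 else 0

lemma IsExtendable.isLink_restrict (h : IsExtendable G D s R F) (h' : IsExtendable G D s R F')
    (hF : F ≤ F') (ha : a ∉ R \ F.verts) (hb : b ∉ R \ F.verts) (hZ : Z.Nodup)
    (hnew : ∀ z ∈ Z, z ∈ F'.verts ∧ z ∉ F.verts)
    (hparent : ∀ z ∈ Z, (F'.parent z = a ∨ F'.parent z = b) ∨ F'.parent z ∈ Z)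
    (hchain : (a :: (Z ++ [b])).IsChain G.Adj)
    (hchild : ∀ v, v = a ∨ v = b → #(F'.children v) ≤ #(F.children v) + 2) :
    IsLink G D s R F (F'.restrict (F.verts ∪ Z.toFinset)) a Z b := by
  have hverts : F.verts ∪ Z.toFinset ⊆ F'.verts :=
    union_subset hF.1 fun z hz => (hnew z (List.mem_toFinset.1 hz)).1
  have hsub : R \ (F.verts ∪ Z.toFinset) ⊆ R \ F.verts :=
    sdiff_subset_sdiff subset_rfl subset_union_left
  have hZR : ∀ z ∈ Z, z ∈ R \ F.verts := fun z hz =>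
    mem_sdiff.2 ⟨h'.subset (hnew z hz).1, (hnew z hz).2⟩
  refine ⟨h'.restrict hverts fun z hz => ?_, rfl, hZ, hZR, hchain, fun v hv => ?_⟩
  · rcases mem_union.1 hz with hz | hz
    · exact fun hz' => h.parent_notMem z hz (hF.2 z hz ▸ hsub hz')
    · rcases hparent z (List.mem_toFinset.1 hz) with (hz' | hz') | hz'
      · exact hz' ▸ fun ha' => ha (hsub ha')
      · exact hz' ▸ fun hb' => hb (hsub hb')
      · exact fun hz'' => (mem_sdiff.1 hz'').2 (mem_union_right _ (List.mem_toFinset.2 hz'))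
  · split_ifs with hvab
    · exact (card_le_card (filter_subset_filter _ hverts)).trans (hchild v hvab)
    · refine (congrArg card (children_eq_of_le (F' := F'.restrict (F.verts ∪ Z.toFinset))
        ⟨subset_union_left, hF.2⟩ ?_)).le
      rintro z hz hzF rfl
      have hzZ := List.mem_toFinset.1 ((mem_union.1 hz).resolve_left hzF)
      exact hv (hZR _ ((hparent z hzZ).resolve_left hvab))

lemma IsBranch.isLink_restrict (h : IsExtendable G D s R F) (h₂ : IsExtendable G D s R F₂)
    (hF : F ≤ F₁) (hF₁ : F₁ ≤ F₂) (ha : a ∉ R \ F.verts) (hb : b ∉ R \ F.verts)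
    (hA : IsBranch F F₁ a ZA x) (hB : IsBranch F₁ F₂ b ZB y) (hxy : G.Adj x y)
    (hchild : ∀ v, v = a ∨ v = b → #(F₂.children v) ≤ #(F.children v) + 2) :
    IsLink G D s R F (F₂.restrict (F.verts ∪ (ZA ++ ZB.reverse).toFinset)) a (ZA ++ ZB.reverse)
      b := by
  have hmem : ∀ z, z ∈ ZA ++ ZB.reverse ↔ z ∈ ZA ∨ z ∈ ZB := fun z => by
    rw [List.mem_append, List.mem_reverse]
  refine h.isLink_restrict h₂ (hF.trans hF₁) ha hb ?_ (fun z hz => ?_) (fun z hz => ?_) ?_ hchild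
  · exact hA.nodup.append (List.nodup_reverse.2 hB.nodup) fun z hz hz' =>
      hB.notMem_verts z (List.mem_reverse.1 hz') (hA.mem_verts z hz)
  · rcases (hmem z).1 hz with hz | hz
    · exact ⟨hF₁.1 (hA.mem_verts z hz), hA.notMem_verts z hz⟩
    · exact ⟨hB.mem_verts z hz, fun hzF => hB.notMem_verts z hz (hF.1 hzF)⟩
  · rw [hmem]
    rcases (hmem z).1 hz with hz | hz
    · exact (List.mem_cons.1 ((hA.mono_right hF₁).parent_mem hz)).imp Or.inl Or.inl
    · exact (List.mem_cons.1 (hB.parent_mem hz)).imp Or.inr Or.inr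
  · exact isChain_adj_append_reverse ((hA.mono_right hF₁).isChain_adj h₂.adj_parent)
      hA.getLast?_eq (hB.isChain_adj h₂.adj_parent) hB.getLast?_eq hxy

lemma IsExtendable.exists_isLink (h : IsExtendable G D s R F) (hJ : IsJoined G s) (hD : 2 ≤ D)
    (hA : ∀ a ∈ A, a ∉ R \ F.verts) (hAchild : ∀ a ∈ A, #(F.children a) + 2 ≤ D)
    (hB : ∀ b ∈ B, b ∉ R \ F.verts) (hBchild : ∀ b ∈ B, #(F.children b) + 2 ≤ D)
    (hAB : Disjoint A B) (hcard : #B = #A) (hs : s ≤ 2 ^ ℓ * #A)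
    (hroom : (2 * D + 1) * s + #F.verts + 2 * (2 ^ (ℓ + 1) * #A) ≤ #R + 4 * #A) :
    ∃ a ∈ A, ∃ b ∈ B, ∃ Z F', Z.length = 2 * ℓ ∧ IsLink G D s R F F' a Z b := by
  have hpow := Nat.mul_le_mul_right #A (Nat.le_self_pow (n := ℓ + 1) (Nat.succ_ne_zero ℓ) 2)
  obtain ⟨F₁, L₁, h₁, hg₁⟩ := h.exists_isBinaryGrowth hJ hD ℓ hA hAchild (by omega)
  have hcard₁ := hg₁.card_verts
  obtain ⟨F₂, L₂, h₂, hg₂⟩ := h₁.exists_isBinaryGrowth hJ hD ℓ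
    (fun b hb => notMem_sdiff_verts_of_le hg₁.le (hB b hb))
    (fun b hb => by
      have hb₁ := hg₁.card_children_le b (hB b hb)
      rw [if_neg (disjoint_right.1 hAB hb)] at hb₁
      exact (Nat.add_le_add_right hb₁ 2).trans (hBchild b hb))
    (by rw [hcard]; omega)
  obtain ⟨x, hx, y, hy, hxy⟩ := hJ (hs.trans hg₁.card_leaves.ge)
    ((hcard ▸ hs).trans hg₂.card_leaves.ge)
  obtain ⟨a, ha, ZA, hZA, hbranchA⟩ := hg₁.exists_isBranch x hx
  obtain ⟨b, hb, ZB, hZB, hbranchB⟩ := hg₂.exists_isBranch y hy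
  refine ⟨a, ha, b, hb, _, _, ?_, hbranchA.isLink_restrict h h₂ hg₁.le hg₂.le (hA a ha) (hB b hb)
    hbranchB hxy fun v hv => ?_⟩
  · rw [List.length_append, List.length_reverse, hZA, hZB, two_mul]
  · have hvR : v ∉ R \ F.verts := by
      rcases hv with rfl | rfl
      exacts [hA v ha, hB v hb]
    have hv₁ := hg₁.card_children_le v hvR
    have hv₂ := hg₂.card_children_le v (notMem_sdiff_verts_of_le hg₁.le hvR)
    have hvAB : v ∈ A → v ∉ B := fun hvA => disjoint_left.1 hAB hvA
    split_ifs at hv₁ hv₂ <;> first | omega | tauto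

lemma IsExtendable.exists_isBranch (h : IsExtendable G D s R F) (hJ : IsJoined G s) (t : ℕ)
    (ha : a ∉ R \ F.verts) (hchild : #(F.children a) + 2 ≤ D)
    (hroom : (2 * D + 1) * s + #F.verts + t ≤ #R) :
    ∃ F' Z b, F ≤ F' ∧ IsExtendable G D s R F' ∧ Z.length = t ∧ IsBranch F F' a Z b ∧
      F'.verts = F.verts ∪ Z.toFinset ∧ #(F'.children b) + 2 ≤ D ∧
      ∀ v ∉ R \ F.verts, v ≠ a → #(F'.children v) = #(F.children v) := by
  induction t generalizing F a with
  | zero => exact ⟨F, [], a, le_rfl, h, rfl, .nil, by simp, hchild, fun _ _ _ => rfl⟩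
  | succ t ih =>
    obtain ⟨y, hy, -, h₁⟩ := h.exists_attach hJ (by omega) ha (by omega)
    have hyF := (mem_sdiff.1 hy).2
    have hle := le_attach (v := a) hyF
    have hverts : (F.attach a y).verts = insert y F.verts := rfl
    have hy₁ : y ∈ (F.attach a y).verts := mem_insert_self y F.verts
    have hya : y ≠ a := ne_of_mem_of_not_mem hy ha
    have hcard : #(F.attach a y).verts = #F.verts + 1 := card_insert_of_notMem hyF
    have hempty : #((F.attach a y).children y) = 0 := by
      rw [card_children_attach hyF, h.children_eq_empty hy, if_neg hya, card_empty]
    obtain ⟨F', Z, b, hF', h', hZ, hbranch, hverts', hb, hchildren⟩ :=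
      ih h₁ (fun hy' => (mem_sdiff.1 hy').2 hy₁) (by omega) (by omega)
    refine ⟨F', y :: Z, b, hle.trans hF', h', congrArg Nat.succ hZ,
      hbranch.cons hle hF' hy₁ hyF parent_attach_self, ?_, hb, fun v hv hva => ?_⟩
    · rw [hverts', hverts, List.toFinset_cons, insert_union, union_insert]
    · rw [hchildren v (notMem_sdiff_verts_of_le hle hv) (ne_of_mem_of_not_mem hy hv).symm,
        card_children_attach hyF, if_neg hva, add_zero]

end Linking

section DoublingDepth

open Finset

/-- The least depth at which `k` binary trees have at least `s` leaves in total. -/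
def doublingDepth (s k : ℕ) : ℕ :=
  Nat.clog 2 (s ⌈/⌉ k)

variable {s k : ℕ}

lemma lt_doublingDepth_iff (hk : 0 < k) {j : ℕ} : j < doublingDepth s k ↔ 2 ^ j * k < s := by
  rw [doublingDepth, Nat.lt_clog_iff_pow_lt one_lt_two, ← not_le, ceilDiv_le_iff_le_mul hk, not_le,
    mul_comm]

lemma le_two_pow_doublingDepth_mul (hk : 0 < k) : s ≤ 2 ^ doublingDepth s k * k :=
  not_lt.1 ((lt_doublingDepth_iff hk).not.1 (lt_irrefl _))

lemma two_pow_doublingDepth_succ_mul_le (hk : 0 < k) :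
    2 ^ (doublingDepth s k + 1) * k ≤ 4 * s + 2 * k := by
  rcases h : doublingDepth s k with _ | j
  · omega
  · have hj : 2 ^ j * k < s := (lt_doublingDepth_iff hk).1 (h ▸ j.lt_succ_self)
    calc 2 ^ (j + 1 + 1) * k = 4 * (2 ^ j * k) := by ring
      _ ≤ 4 * s + 2 * k := by omega

lemma doublingDepth_eq_card (hk : 0 < k) :
    doublingDepth s k = #{j ∈ range s | 2 ^ j * k < s} := by
  rw [← card_range (doublingDepth s k)]
  congr 1
  ext j
  rw [mem_filter, mem_range, mem_range, lt_doublingDepth_iff hk, iff_and_self]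
  exact fun hj => (Nat.lt_two_pow_self.trans_le (Nat.le_mul_of_pos_right _ hk)).trans hj

lemma sum_doublingDepth_le (s m : ℕ) : ∑ k ∈ range m, doublingDepth s (k + 1) ≤ 2 * s := by
  have hlayer : ∀ j, #{k ∈ range m | 2 ^ j * (k + 1) < s} ≤ s / 2 ^ j := fun j =>
    calc #{k ∈ range m | 2 ^ j * (k + 1) < s} ≤ #(range (s / 2 ^ j)) := by
          refine card_le_card fun k hk => mem_range.2 ?_
          rw [← Nat.add_one_le_iff, Nat.le_div_iff_mul_le (by positivity), mul_comm]
          exact (mem_filter.1 hk).2.le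
      _ = s / 2 ^ j := card_range _
  calc ∑ k ∈ range m, doublingDepth s (k + 1)
      = ∑ k ∈ range m, #{j ∈ range s | 2 ^ j * (k + 1) < s} :=
        sum_congr rfl fun k _ => doublingDepth_eq_card k.succ_pos
    _ = ∑ j ∈ range s, #{k ∈ range m | 2 ^ j * (k + 1) < s} :=
        sum_card_bipartiteAbove_eq_sum_card_bipartiteBelow _
    _ ≤ ∑ j ∈ range s, s / 2 ^ j := sum_le_sum fun j _ => hlayer j
    _ ≤ 2 * s := by simpa [mul_comm] using Nat.geom_sum_le le_rfl s s

lemma sum_doublingDepth_half_le (s m : ℕ) :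
    ∑ i ∈ range m, 2 * doublingDepth s ((i + 2) / 2) ≤ 8 * s := by
  have hpairs : ∀ m, ∑ i ∈ range (2 * m), doublingDepth s ((i + 2) / 2) =
      2 * ∑ k ∈ range m, doublingDepth s (k + 1) := fun m => by
    induction m with
    | zero => rfl
    | succ m ih =>
      rw [Nat.mul_succ, sum_range_succ, sum_range_succ, ih, sum_range_succ,
        show (2 * m + 2) / 2 = m + 1 by omega, show (2 * m + 1 + 2) / 2 = m + 1 by omega]
      ring
  calc ∑ i ∈ range m, 2 * doublingDepth s ((i + 2) / 2)
      ≤ ∑ i ∈ range (2 * m), 2 * doublingDepth s ((i + 2) / 2) :=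
        sum_le_sum_of_subset (range_subset_range.2 (by omega))
    _ = 4 * ∑ k ∈ range m, doublingDepth s (k + 1) := by rw [← mul_sum, hpairs]; ring
    _ ≤ 8 * s := by linarith [sum_doublingDepth_le s m]

end DoublingDepth

section Joining

open Finset ParentForest

variable {V : Type*} {G : SimpleGraph V} {D s : ℕ} {S : Finset V} {𝓟 𝓐 : Finset (List V)}
  {a b v : V} {l l₁ l₂ Z : List V}

/-- The lists in `𝓟` are the vertex sequences of vertex-disjoint nonempty paths in `G` covering
exactly `S`. -/
structure IsPathPartition (G : SimpleGraph V) (S : Finset V) (𝓟 : Finset (List V)) : Prop where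
  ne_nil : ∀ l ∈ 𝓟, l ≠ []
  nodup : ∀ l ∈ 𝓟, l.Nodup
  isChain : ∀ l ∈ 𝓟, l.IsChain G.Adj
  disjoint : (𝓟 : Set (List V)).Pairwise List.Disjoint
  mem_iff : ∀ v, v ∈ S ↔ ∃ l ∈ 𝓟, v ∈ l

lemma head?_ne_getLast? (hl : l.Nodup) (hlen : 2 ≤ l.length) : l.head? ≠ l.getLast? := by
  match l, hl, hlen with
  | a :: b :: l, hl, _ =>
    rw [List.head?_cons, List.getLast?_cons_cons]
    exact fun h => (List.nodup_cons.1 hl).1 (List.mem_of_getLast? h.symm)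

lemma getLast?_append_eq_some (ha : l.getLast? = some a) (hb : (a :: Z).getLast? = some b) :
    (l ++ Z).getLast? = some b := by
  obtain ⟨u, rfl⟩ := List.getLast?_eq_some_iff.1 ha
  rw [List.append_assoc, List.singleton_append,
    List.getLast?_append_of_ne_nil _ (List.cons_ne_nil a Z), hb]

lemma isChain_append_of_getLast? {r : V → V → Prop} (hl : l.IsChain r) (ha : l.getLast? = some a)
    (hZ : (a :: Z).IsChain r) : (l ++ Z).IsChain r := by
  obtain ⟨u, rfl⟩ := List.getLast?_eq_some_iff.1 ha
  rw [List.append_assoc, List.singleton_append]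
  exact List.isChain_split.2 ⟨hl, hZ⟩

lemma isChain_append_append {r : V → V → Prop} (h₁ : l₁.IsChain r) (h₂ : l₂.IsChain r)
    (ha : l₁.getLast? = some a) (hb : l₂.head? = some b) (hZ : (a :: (Z ++ [b])).IsChain r) :
    (l₁ ++ (Z ++ l₂)).IsChain r := by
  obtain ⟨w, rfl⟩ := List.head?_eq_some_iff.1 hb
  refine isChain_append_of_getLast? h₁ ha ?_
  rw [← List.cons_append]
  exact List.isChain_split.2 ⟨hZ, h₂⟩

lemma IsPathPartition.eq_of_mem (h : IsPathPartition G S 𝓟) (h₁ : l₁ ∈ 𝓟) (h₂ : l₂ ∈ 𝓟)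
    (hv₁ : v ∈ l₁) (hv₂ : v ∈ l₂) : l₁ = l₂ := by
  by_contra hne
  exact h.disjoint h₁ h₂ hne hv₁ hv₂

lemma IsPathPartition.disjoint_append (h : IsPathPartition G S 𝓟) (h₁ : l₁ ∈ 𝓟) (h₂ : l₂ ∈ 𝓟)
    (hZS : ∀ z ∈ Z, z ∉ S) (hl : l ∈ 𝓟) (hl₁ : l ≠ l₁) (hl₂ : l ≠ l₂) :
    List.Disjoint (l₁ ++ (Z ++ l₂)) l := fun v hv hvl => by
  rcases List.mem_append.1 hv with hv | hv
  · exact hl₁ (h.eq_of_mem hl h₁ hvl hv)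
  · rcases List.mem_append.1 hv with hv | hv
    · exact hZS v hv ((h.mem_iff v).2 ⟨l, hl, hvl⟩)
    · exact hl₂ (h.eq_of_mem hl h₂ hvl hv)

lemma IsPathPartition.exists_transversal (h : IsPathPartition G S 𝓟) (h𝓐 : 𝓐 ⊆ 𝓟)
    (e : List V → Option V) (he : ∀ l ∈ 𝓐, ∃ v ∈ l, e l = some v) :
    ∃ A : Finset V, #A = #𝓐 ∧ ∀ a ∈ A, ∃ l ∈ 𝓐, a ∈ l ∧ e l = some a := by
  have hmem : ∀ l ∈ 𝓐, ∀ a ∈ (e l).toFinset, a ∈ l ∧ e l = some a := fun l hl a ha => by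
    obtain ⟨v, hv, hlv⟩ := he l hl
    obtain rfl : v = a := Option.some_injective _ (hlv.symm.trans (Option.mem_toFinset.1 ha))
    exact ⟨hv, hlv⟩
  refine ⟨𝓐.biUnion fun l => (e l).toFinset, ?_, fun a ha => ?_⟩
  · rw [card_biUnion fun l hl l' hl' hne => disjoint_left.2 fun a ha ha' =>
      h.disjoint (h𝓐 hl) (h𝓐 hl') hne (hmem l hl a ha).1 (hmem l' hl' a ha').1, card_eq_sum_ones]
    refine sum_congr rfl fun l hl => ?_
    obtain ⟨v, -, hlv⟩ := he l hl
    rw [hlv, Option.toFinset_some, card_singleton]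
  · obtain ⟨l, hl, ha⟩ := mem_biUnion.1 ha
    exact ⟨l, hl, hmem l hl a ha⟩

variable [DecidableEq V]

/-- The family obtained from `𝓟` by replacing `l₁` and `l₂` by their concatenation through `Z`. -/
def splice (𝓟 : Finset (List V)) (l₁ Z l₂ : List V) : Finset (List V) :=
  insert (l₁ ++ (Z ++ l₂)) ((𝓟.erase l₁).erase l₂)

lemma mem_splice :
    l ∈ splice 𝓟 l₁ Z l₂ ↔ l = l₁ ++ (Z ++ l₂) ∨ l ∈ 𝓟 ∧ l ≠ l₁ ∧ l ≠ l₂ := by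
  simp only [splice, mem_insert, mem_erase]
  tauto

lemma exists_mem_splice (h₁ : l₁ ∈ 𝓟) (h₂ : l₂ ∈ 𝓟) :
    (∃ l ∈ splice 𝓟 l₁ Z l₂, v ∈ l) ↔ (∃ l ∈ 𝓟, v ∈ l) ∨ v ∈ Z := by
  simp only [mem_splice, or_and_right, exists_or, exists_eq_left, List.mem_append]
  constructor
  · rintro ((hv | hv | hv) | ⟨l, ⟨hl, -⟩, hv⟩)
    exacts [Or.inl ⟨l₁, h₁, hv⟩, Or.inr hv, Or.inl ⟨l₂, h₂, hv⟩, Or.inl ⟨l, hl, hv⟩]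
  · rintro (⟨l, hl, hv⟩ | hv)
    · by_cases hl₁ : l = l₁
      · exact Or.inl (Or.inl (hl₁ ▸ hv))
      · by_cases hl₂ : l = l₂
        · exact Or.inl (Or.inr (Or.inr (hl₂ ▸ hv)))
        · exact Or.inr ⟨l, ⟨hl, hl₁, hl₂⟩, hv⟩
    · exact Or.inl (Or.inr (Or.inl hv))

lemma IsPathPartition.isPathPartition_splice (h : IsPathPartition G S 𝓟) (h₁ : l₁ ∈ 𝓟)
    (h₂ : l₂ ∈ 𝓟) (hne : l₁ ≠ l₂) (hZ : Z.Nodup) (hZS : ∀ z ∈ Z, z ∉ S)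
    (hchain : (l₁ ++ (Z ++ l₂)).IsChain G.Adj) :
    IsPathPartition G (S ∪ Z.toFinset) (splice 𝓟 l₁ Z l₂) := by
  have hZl : ∀ l ∈ 𝓟, ∀ z ∈ Z, z ∉ l := fun l hl z hz hzl =>
    hZS z hz ((h.mem_iff z).2 ⟨l, hl, hzl⟩)
  have hdisj : ∀ {l}, l ∈ 𝓟 ∧ l ≠ l₁ ∧ l ≠ l₂ → List.Disjoint (l₁ ++ (Z ++ l₂)) l :=
    fun ⟨hl, hl₁, hl₂⟩ => h.disjoint_append h₁ h₂ hZS hl hl₁ hl₂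
  refine ⟨fun l hl => ?_, fun l hl => ?_, fun l hl => ?_, fun l hl l' hl' hll' => ?_, fun v => ?_⟩
  · obtain rfl | ⟨hl, -⟩ := mem_splice.1 hl
    exacts [List.append_ne_nil_of_left_ne_nil (h.ne_nil l₁ h₁) _, h.ne_nil l hl]
  · obtain rfl | ⟨hl, -⟩ := mem_splice.1 hl
    · refine (h.nodup l₁ h₁).append (hZ.append (h.nodup l₂ h₂) (hZl l₂ h₂)) fun v hv₁ hv => ?_
      exact (List.mem_append.1 hv).elim (hZl l₁ h₁ v · hv₁) (h.disjoint h₁ h₂ hne hv₁)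
    · exact h.nodup l hl
  · obtain rfl | ⟨hl, -⟩ := mem_splice.1 hl
    exacts [hchain, h.isChain l hl]
  · obtain rfl | hl := mem_splice.1 hl <;> obtain rfl | hl' := mem_splice.1 hl'
    · exact absurd rfl hll'
    · exact hdisj hl'
    · exact (hdisj hl).symm
    · exact h.disjoint hl.1 hl'.1 hll'
  · rw [mem_union, List.mem_toFinset, h.mem_iff, exists_mem_splice h₁ h₂]

lemma IsPathPartition.card_splice (h : IsPathPartition G S 𝓟) (h₁ : l₁ ∈ 𝓟) (h₂ : l₂ ∈ 𝓟)
    (hne : l₁ ≠ l₂) : #(splice 𝓟 l₁ Z l₂) + 1 = #𝓟 := by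
  have hnew : l₁ ++ (Z ++ l₂) ∉ (𝓟.erase l₁).erase l₂ := fun hl => by
    obtain ⟨-, hl₁, hl⟩ := by simpa only [mem_erase] using hl
    obtain ⟨v, hv⟩ := List.exists_mem_of_ne_nil l₁ (h.ne_nil l₁ h₁)
    exact hl₁ (h.eq_of_mem hl h₁ (List.mem_append_left _ hv) hv)
  have h₂' : l₂ ∈ 𝓟.erase l₁ := mem_erase.2 ⟨hne.symm, h₂⟩
  rw [splice, card_insert_of_notMem hnew, card_erase_add_one h₂', card_erase_add_one h₁]

/-- The number of children set aside at `v` so that the path `l` can grow two at each of its ends: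
an end contributes `2`, and the vertex of a one-vertex path is both ends. -/
def reserve (l : List V) (v : V) : ℕ :=
  (if l.head? = some v then 2 else 0) + if l.getLast? = some v then 2 else 0

lemma two_le_reserve (hv : l.head? = some v ∨ l.getLast? = some v) : 2 ≤ reserve l v := by
  rw [reserve]
  rcases hv with hv | hv <;> simp [hv]

lemma reserve_append_left (hl₂ : l₂ ≠ []) (hv₁ : v ∈ l₁) (hv₂ : v ∉ l₂) :
    reserve (l₁ ++ (Z ++ l₂)) v + (if l₁.getLast? = some v then 2 else 0) = reserve l₁ v := by
  have hlast : l₂.getLast? ≠ some v := fun h => hv₂ (List.mem_of_getLast? h)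
  rw [reserve, reserve, List.head?_append_of_ne_nil _ (List.ne_nil_of_mem hv₁), ← List.append_assoc,
    List.getLast?_append_of_ne_nil _ hl₂, if_neg hlast, add_zero]

lemma reserve_append_right (hl₁ : l₁ ≠ []) (hv₁ : v ∉ l₁) (hv₂ : v ∈ l₂) :
    reserve (l₁ ++ (Z ++ l₂)) v + (if l₂.head? = some v then 2 else 0) = reserve l₂ v := by
  have hhead : l₁.head? ≠ some v := fun h => hv₁ (List.mem_of_head? h)
  rw [reserve, reserve, List.head?_append_of_ne_nil _ hl₁, ← List.append_assoc,
    List.getLast?_append_of_ne_nil _ (List.ne_nil_of_mem hv₂), if_neg hhead, zero_add, add_comm]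

variable {R₁ R : Finset V} {F F' : ParentForest V}

/-- The forest `F` is extendable and the paths in `𝓟` partition its vertices together with `R₁`,
in such a way that every path can grow two more children at each of its ends. -/
structure IsJoinable (G : SimpleGraph V) (D s : ℕ) (R₁ R : Finset V) (F : ParentForest V)
    (𝓟 : Finset (List V)) : Prop where
  isExtendable : IsExtendable G D s R F
  isPathPartition : IsPathPartition G (R₁ ∪ F.verts) 𝓟
  card_children_add_reserve_le : ∀ l ∈ 𝓟, ∀ v, l.head? = some v ∨ l.getLast? = some v →
    #(F.children v) + reserve l v ≤ D

lemma IsJoinable.notMem_sdiff (h : IsJoinable G D s R₁ R F 𝓟) (hR : Disjoint R₁ R) (hl : l ∈ 𝓟)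
    (hv : v ∈ l) : v ∉ R \ F.verts := fun hvR => by
  obtain ⟨hvR, hvF⟩ := mem_sdiff.1 hvR
  exact (mem_union.1 ((h.isPathPartition.mem_iff v).2 ⟨l, hl, hv⟩)).elim
    (disjoint_left.1 hR · hvR) hvF

lemma IsJoinable.card_children_add_two_le (h : IsJoinable G D s R₁ R F 𝓟) (hl : l ∈ 𝓟)
    (hv : l.head? = some v ∨ l.getLast? = some v) : #(F.children v) + 2 ≤ D :=
  (Nat.add_le_add_left (two_le_reserve hv) _).trans (h.card_children_add_reserve_le l hl v hv)

lemma IsJoinable.card_children_add_reserve_append_le (h : IsJoinable G D s R₁ R F 𝓟)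
    (hR : Disjoint R₁ R) (h₁ : l₁ ∈ 𝓟) (h₂ : l₂ ∈ 𝓟) (hne : l₁ ≠ l₂) (ha : l₁.getLast? = some a)
    (hb : l₂.head? = some b) (hZ : IsLink G D s R F F' a Z b)
    (hv : l₁.head? = some v ∨ l₂.getLast? = some v) :
    #(F'.children v) + reserve (l₁ ++ (Z ++ l₂)) v ≤ D := by
  have hP := h.isPathPartition
  rcases hv with hv | hv
  · have hv₁ := List.mem_of_head? hv
    have hv₂ : v ∉ l₂ := hP.disjoint h₁ h₂ hne hv₁
    have hvb : v ≠ b := (ne_of_mem_of_not_mem (List.mem_of_head? hb) hv₂).symm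
    have hle := hZ.card_children_le v (h.notMem_sdiff hR h₁ hv₁)
    have hres := h.card_children_add_reserve_le l₁ h₁ v (Or.inl hv)
    rw [← reserve_append_left (Z := Z) (hP.ne_nil l₂ h₂) hv₁ hv₂, ha] at hres
    simp only [Option.some_inj, eq_comm (b := v)] at hres
    simp only [hvb, or_false] at hle
    omega
  · have hv₂ := List.mem_of_getLast? hv
    have hv₁ : v ∉ l₁ := fun hv₁ => hP.disjoint h₁ h₂ hne hv₁ hv₂
    have hva : v ≠ a := (ne_of_mem_of_not_mem (List.mem_of_getLast? ha) hv₁).symm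
    have hle := hZ.card_children_le v (h.notMem_sdiff hR h₂ hv₂)
    have hres := h.card_children_add_reserve_le l₂ h₂ v (Or.inr hv)
    rw [← reserve_append_right (Z := Z) (hP.ne_nil l₁ h₁) hv₁ hv₂, hb] at hres
    simp only [Option.some_inj, eq_comm (b := v)] at hres
    simp only [hva, false_or] at hle
    omega

lemma IsJoinable.isJoinable_splice (h : IsJoinable G D s R₁ R F 𝓟) (hR : Disjoint R₁ R)
    (h₁ : l₁ ∈ 𝓟) (h₂ : l₂ ∈ 𝓟) (hne : l₁ ≠ l₂) (ha : l₁.getLast? = some a)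
    (hb : l₂.head? = some b) (hZ : IsLink G D s R F F' a Z b) :
    IsJoinable G D s R₁ R F' (splice 𝓟 l₁ Z l₂) := by
  have hP := h.isPathPartition
  refine ⟨hZ.isExtendable, ?_, fun l hl v hv => ?_⟩
  · rw [hZ.verts_eq, ← union_assoc]
    refine hP.isPathPartition_splice h₁ h₂ hne hZ.nodup (fun z hz hzS => ?_)
      (isChain_append_append (hP.isChain l₁ h₁) (hP.isChain l₂ h₂) ha hb hZ.isChain)
    obtain ⟨l, hl, hzl⟩ := (hP.mem_iff z).1 hzS
    exact h.notMem_sdiff hR hl hzl (hZ.mem_sdiff z hz)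
  · obtain rfl | ⟨hl, hll₁, hll₂⟩ := mem_splice.1 hl
    · rw [List.head?_append_of_ne_nil _ (hP.ne_nil l₁ h₁), ← List.append_assoc,
        List.getLast?_append_of_ne_nil _ (hP.ne_nil l₂ h₂)] at hv
      exact h.card_children_add_reserve_append_le hR h₁ h₂ hne ha hb hZ hv
    · have hvl : v ∈ l := hv.elim List.mem_of_head? List.mem_of_getLast?
      have hva : v ≠ a := fun hva =>
        hll₁ (hP.eq_of_mem hl h₁ hvl (hva ▸ List.mem_of_getLast? ha))
      have hvb : v ≠ b := fun hvb => hll₂ (hP.eq_of_mem hl h₂ hvl (hvb ▸ List.mem_of_head? hb))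
      have hle := hZ.card_children_le v (h.notMem_sdiff hR hl hvl)
      rw [if_neg (not_or.2 ⟨hva, hvb⟩), add_zero] at hle
      exact (Nat.add_le_add_right hle _).trans (h.card_children_add_reserve_le l hl v hv)

lemma IsExtendable.exists_isLink_doublingDepth {A B : Finset V} (h : IsExtendable G D s R F)
    (hJ : IsJoined G s) (hne : A.Nonempty) (hA : ∀ a ∈ A, a ∉ R \ F.verts ∧ #(F.children a) + 2 ≤ D)
    (hB : ∀ b ∈ B, b ∉ R \ F.verts ∧ #(F.children b) + 2 ≤ D) (hAB : Disjoint A B)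
    (hcard : #B = #A) (hroom : (2 * D + 9) * s + #F.verts ≤ #R) :
    ∃ a ∈ A, ∃ b ∈ B, ∃ Z F', Z.length = 2 * doublingDepth s #A ∧ IsLink G D s R F F' a Z b := by
  have hdepth := two_pow_doublingDepth_succ_mul_le (s := s) hne.card_pos
  have hD : 2 ≤ D := hne.elim fun a ha => (Nat.le_add_left 2 _).trans (hA a ha).2
  rw [show (2 * D + 9) * s = (2 * D + 1) * s + 8 * s by ring] at hroom
  exact h.exists_isLink hJ hD (fun a ha => (hA a ha).1) (fun a ha => (hA a ha).2)
    (fun b hb => (hB b hb).1) (fun b hb => (hB b hb).2) hAB hcard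
    (le_two_pow_doublingDepth_mul hne.card_pos) (by omega)

lemma IsJoinable.exists_card_add_one (h : IsJoinable G D s R₁ R F 𝓟) (hJ : IsJoined G s)
    (hR : Disjoint R₁ R) (h𝓟 : 2 ≤ #𝓟) (hroom : (2 * D + 9) * s + #F.verts ≤ #R) :
    ∃ F' 𝓟', IsJoinable G D s R₁ R F' 𝓟' ∧ #𝓟' + 1 = #𝓟 ∧
      #F'.verts ≤ #F.verts + 2 * doublingDepth s (#𝓟 / 2) := by
  have hP := h.isPathPartition
  obtain ⟨𝓐, h𝓐, hcard𝓐⟩ := exists_subset_card_eq (s := 𝓟) (n := #𝓟 / 2) (by omega)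
  have hrest : #(𝓟 \ 𝓐) = #𝓟 - #𝓟 / 2 := by rw [card_sdiff_of_subset h𝓐, hcard𝓐]
  obtain ⟨𝓑, h𝓑, hcard𝓑⟩ := exists_subset_card_eq (s := 𝓟 \ 𝓐) (n := #𝓟 / 2) (by omega)
  have h𝓑𝓟 : 𝓑 ⊆ 𝓟 := h𝓑.trans sdiff_subset
  obtain ⟨A, hcardA, hA⟩ := hP.exists_transversal h𝓐 List.getLast? fun l hl =>
    ⟨_, List.getLast_mem (hP.ne_nil l (h𝓐 hl)), List.getLast?_eq_some_getLast _⟩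
  obtain ⟨B, hcardB, hB⟩ := hP.exists_transversal h𝓑𝓟 List.head? fun l hl =>
    ⟨_, List.head_mem (hP.ne_nil l (h𝓑𝓟 hl)), List.head?_eq_some_head _⟩
  have hne : ∀ {l₁ l₂}, l₁ ∈ 𝓐 → l₂ ∈ 𝓑 → l₁ ≠ l₂ := fun h₁ h₂ h₁₂ =>
    (mem_sdiff.1 (h𝓑 h₂)).2 (h₁₂ ▸ h₁)
  obtain ⟨a, ha, b, hb, Z, F', hlen, hZ⟩ := h.isExtendable.exists_isLink_doublingDepth hJ
    (A := A) (B := B) (card_pos.1 (by omega))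
    (fun a ha => (hA a ha).elim fun l hl =>
      ⟨h.notMem_sdiff hR (h𝓐 hl.1) hl.2.1, h.card_children_add_two_le (h𝓐 hl.1) (Or.inr hl.2.2)⟩)
    (fun b hb => (hB b hb).elim fun l hl =>
      ⟨h.notMem_sdiff hR (h𝓑𝓟 hl.1) hl.2.1, h.card_children_add_two_le (h𝓑𝓟 hl.1) (Or.inl hl.2.2)⟩)
    (disjoint_left.2 fun v hvA hvB => by
      obtain ⟨l₁, h₁, hv₁, -⟩ := hA v hvA
      obtain ⟨l₂, h₂, hv₂, -⟩ := hB v hvB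
      exact hne h₁ h₂ (hP.eq_of_mem (h𝓐 h₁) (h𝓑𝓟 h₂) hv₁ hv₂))
    (by omega) hroom
  obtain ⟨l₁, h₁, -, hla⟩ := hA a ha
  obtain ⟨l₂, h₂, -, hlb⟩ := hB b hb
  refine ⟨F', _, h.isJoinable_splice hR (h𝓐 h₁) (h𝓑𝓟 h₂) (hne h₁ h₂) hla hlb hZ,
    hP.card_splice (h𝓐 h₁) (h𝓑𝓟 h₂) (hne h₁ h₂), ?_⟩
  rw [hZ.verts_eq, ← hcard𝓐, ← hcardA, ← hlen]
  exact (card_union_le _ _).trans (Nat.add_le_add_left (List.toFinset_card_le Z) _)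

lemma IsJoinable.exists_singleton (h : IsJoinable G D s R₁ R F 𝓟) (hJ : IsJoined G s)
    (hR : Disjoint R₁ R) {m : ℕ} (h𝓟 : #𝓟 = m + 1)
    (hroom : (2 * D + 9) * s + #F.verts + ∑ i ∈ range m, 2 * doublingDepth s ((i + 2) / 2) ≤ #R) :
    ∃ F' P, IsJoinable G D s R₁ R F' {P} ∧
      #F'.verts ≤ #F.verts + ∑ i ∈ range m, 2 * doublingDepth s ((i + 2) / 2) := by
  induction m generalizing F 𝓟 with
  | zero =>
    obtain ⟨P, rfl⟩ := card_eq_one.1 h𝓟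
    exact ⟨F, P, h, Nat.le_add_right _ _⟩
  | succ m ih =>
    rw [sum_range_succ] at hroom ⊢
    obtain ⟨F₁, 𝓟₁, h₁, hcard, hverts⟩ := h.exists_card_add_one hJ hR (by omega) (by omega)
    rw [h𝓟, show m + 1 + 1 = m + 2 from rfl] at hverts
    obtain ⟨F', P, h', hverts'⟩ := ih h₁ (by omega) (by omega)
    exact ⟨F', P, h', by omega⟩

lemma IsExtendable.isJoinable_singletons (h : IsExtendable G D s R F) (hF : F.verts = ∅)
    (hD : 4 ≤ D) (R₁ : Finset V) : IsJoinable G D s R₁ R F (R₁.image fun v => [v]) where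
  isExtendable := h
  isPathPartition := by
    constructor <;> simp +contextual [hF, Set.Pairwise, eq_comm]
  card_children_add_reserve_le l _ v _ := by
    have hchildren : F.children v = ∅ := by rw [children, hF, filter_empty]
    have hreserve : reserve l v ≤ 4 := by
      rw [reserve]
      split_ifs <;> omega
    rw [hchildren, card_empty, zero_add]
    exact hreserve.trans hD

theorem IsExtendable.exists_isJoinable_singleton (h : IsExtendable G D s R F) (hJ : IsJoined G s)
    (hF : F.verts = ∅) (hD : 4 ≤ D) (hR : Disjoint R₁ R) (hR₁ : R₁.Nonempty)
    (hroom : (2 * D + 17) * s ≤ #R) :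
    ∃ F' P, IsJoinable G D s R₁ R F' {P} ∧ #F'.verts ≤ 8 * s := by
  obtain ⟨m, hm⟩ := Nat.exists_eq_add_one_of_ne_zero hR₁.card_pos.ne'
  have hcost := sum_doublingDepth_half_le s m
  rw [show (2 * D + 17) * s = (2 * D + 9) * s + 8 * s by ring] at hroom
  have hF' : #F.verts = 0 := card_eq_zero.2 hF
  obtain ⟨F', P, h', hverts⟩ := (h.isJoinable_singletons hF hD R₁).exists_singleton hJ hR
    (m := m) ((card_image_of_injective _ List.singleton_injective).trans hm) (by omega)
  exact ⟨F', P, h', by omega⟩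

end Joining

section Cycle

open Finset ParentForest

variable {V : Type*} [DecidableEq V] {G : SimpleGraph V} {D s m : ℕ} {S R₁ R : Finset V}
  {F : ParentForest V} {y : V} {l P : List V}

lemma exists_isCycle_support_toFinset_eq (hl : 2 ≤ l.length) (hnodup : (y :: l).Nodup)
    (hchain : (y :: (l ++ [y])).IsChain G.Adj) :
    ∃ w : G.Walk y y, w.IsCycle ∧ w.support.toFinset = (y :: l).toFinset := by
  let w : G.Walk y y :=
    (SimpleGraph.Walk.ofSupport _ (List.cons_ne_nil y _) hchain).copy rfl (by simp)
  have hsupport : w.support = y :: (l ++ [y]) := by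
    exact (SimpleGraph.Walk.support_copy _ _ _).trans (SimpleGraph.Walk.support_ofSupport _ _)
  have hlength : w.length = l.length + 1 := by
    have h := w.length_support
    rw [hsupport, List.length_cons, List.length_append, List.length_singleton] at h
    omega
  refine ⟨w, ?_, ?_⟩
  · have hnil : ¬w.Nil := fun h => by
      rw [SimpleGraph.Walk.length_eq_zero_iff.2 h] at hlength
      omega
    rw [SimpleGraph.Walk.isCycle_iff_isPath_tail_and_le_length, SimpleGraph.Walk.isPath_def,
      SimpleGraph.Walk.support_tail_of_not_nil _ hnil, hsupport, hlength]
    exact ⟨List.nodup_append_comm.1 hnodup, by omega⟩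
  · ext v
    simp [hsupport]

lemma isPathPartition_singleton :
    IsPathPartition G S {P} ↔ P ≠ [] ∧ P.Nodup ∧ P.IsChain G.Adj ∧ P.toFinset = S := by
  constructor
  · intro h
    have hP := mem_singleton_self P
    exact ⟨h.ne_nil P hP, h.nodup P hP, h.isChain P hP, by ext; simp [h.mem_iff]⟩
  · rintro ⟨hne, hnodup, hchain, rfl⟩
    constructor <;> simp [hne, hnodup, hchain]

lemma IsJoinable.length_eq (h : IsJoinable G D s R₁ R F {P}) (hR : Disjoint R₁ R) :
    P.length = #R₁ + #F.verts := by
  obtain ⟨-, hnodup, -, hverts⟩ := isPathPartition_singleton.1 h.isPathPartition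
  rw [← List.toFinset_card_of_nodup hnodup, hverts,
    card_union_of_disjoint (disjoint_of_subset_right h.isExtendable.subset hR)]

lemma IsJoinable.exists_ends (h : IsJoinable G D s R₁ R F {P}) (hR : Disjoint R₁ R)
    (hP : 2 ≤ P.length) :
    ∃ y x, P.head? = some y ∧ P.getLast? = some x ∧ y ≠ x ∧
      (y ∉ R \ F.verts ∧ #(F.children y) + 2 ≤ D) ∧ x ∉ R \ F.verts ∧ #(F.children x) + 2 ≤ D := by
  obtain ⟨hne, hnodup, -, -⟩ := isPathPartition_singleton.1 h.isPathPartition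
  have hend : ∀ v, P.head? = some v ∨ P.getLast? = some v →
      v ∉ R \ F.verts ∧ #(F.children v) + 2 ≤ D := fun v hv =>
    ⟨h.notMem_sdiff hR (mem_singleton_self P) (hv.elim List.mem_of_head? List.mem_of_getLast?),
      h.card_children_add_two_le (mem_singleton_self P) hv⟩
  have hhead := List.head?_eq_some_head hne
  have hlast := List.getLast?_eq_some_getLast hne
  refine ⟨_, _, hhead, hlast, fun heq => ?_, hend _ (Or.inl hhead), hend _ (Or.inr hlast)⟩
  exact head?_ne_getLast? hnodup hP (by rw [hhead, hlast, heq])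

lemma IsJoinable.exists_append (h : IsJoinable G D s R₁ R F {P}) (hJ : IsJoined G s)
    (hR : Disjoint R₁ R) (hP : 2 ≤ P.length) (t : ℕ)
    (hroom : (2 * D + 1) * s + #F.verts + t ≤ #R) :
    ∃ F' Z, Z.length = t ∧ IsJoinable G D s R₁ R F' {P ++ Z} := by
  obtain ⟨hne, hnodup, hchain, hverts⟩ := isPathPartition_singleton.1 h.isPathPartition
  obtain ⟨y, x, hy, hx, hyx, ⟨hyR, hyD⟩, hxR, hxD⟩ := h.exists_ends hR hP
  obtain ⟨F', Z, b, -, h', hZt, hZ, hF', hb, hchildren⟩ :=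
    h.isExtendable.exists_isBranch hJ t hxR hxD hroom
  have hPZ : (P ++ Z).Nodup := hnodup.append hZ.nodup fun z hzP hz =>
    h.notMem_sdiff hR (mem_singleton_self P) hzP
      (mem_sdiff.2 ⟨h'.subset (hZ.mem_verts z hz), hZ.notMem_verts z hz⟩)
  have hlast : (P ++ Z).getLast? = some b := getLast?_append_eq_some hx hZ.getLast?_eq
  have hhead : (P ++ Z).head? = some y := (List.head?_append_of_ne_nil _ hne).trans hy
  have hyb : y ≠ b := fun hyb => by
    refine head?_ne_getLast? hPZ ?_ (by rw [hhead, hlast, hyb])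
    exact hP.trans (List.sublist_append_left P Z).length_le
  refine ⟨F', Z, hZt, h', isPathPartition_singleton.2
    ⟨List.append_ne_nil_of_left_ne_nil hne _, hPZ,
      isChain_append_of_getLast? hchain hx (hZ.isChain_adj h'.adj_parent), ?_⟩,
    fun l hl v hv => ?_⟩
  · rw [List.toFinset_append, hverts, hF', union_assoc]
  · obtain rfl := mem_singleton.1 hl
    rw [reserve]
    rw [hhead, hlast] at hv ⊢
    rcases hv with hv | hv <;> obtain rfl := Option.some_injective _ hv
    · simpa [hyb.symm, hchildren y hyR hyx] using hyD
    · simpa [hyb] using hb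

theorem IsJoinable.exists_isCycle (h : IsJoinable G D s R₁ R F {P}) (hJ : IsJoined G s)
    (hR : Disjoint R₁ R) (hP : 3 ≤ P.length) (hroom : (2 * D + 9) * s + #F.verts ≤ #R) :
    ∃ (y : V) (w : G.Walk y y), w.IsCycle ∧
      #w.support.toFinset = P.length + 2 * doublingDepth s 1 ∧
      R₁ ⊆ w.support.toFinset ∧ w.support.toFinset ⊆ R₁ ∪ R := by
  obtain ⟨-, hnodup, hchain, hverts⟩ := isPathPartition_singleton.1 h.isPathPartition
  obtain ⟨y, x, hy, hx, hyx, hyD, hxD⟩ := h.exists_ends hR (by omega)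
  obtain ⟨a, ha, b, hb, Z, F', hZlen, hZ⟩ := h.isExtendable.exists_isLink_doublingDepth hJ
    (A := {x}) (B := {y}) (singleton_nonempty x)
    (by simpa only [mem_singleton, forall_eq] using hxD)
    (by simpa only [mem_singleton, forall_eq] using hyD) (disjoint_singleton.2 hyx.symm) rfl hroom
  obtain rfl := mem_singleton.1 ha
  obtain rfl := mem_singleton.1 hb
  obtain ⟨P', rfl⟩ := List.head?_eq_some_iff.1 hy
  have hcycle : (b :: (P' ++ Z)).Nodup := hnodup.append hZ.nodup fun z hzP hz =>
    h.notMem_sdiff hR (mem_singleton_self _) hzP (hZ.mem_sdiff z hz)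
  obtain ⟨w, hw, hsupport⟩ := exists_isCycle_support_toFinset_eq (l := P' ++ Z)
    (by rw [List.length_cons] at hP; rw [List.length_append]; omega) hcycle
    (by rw [List.append_assoc]; exact isChain_append_of_getLast? hchain hx hZ.isChain)
  have hsupport' : w.support.toFinset = R₁ ∪ F.verts ∪ Z.toFinset := by
    rw [hsupport, ← hverts, ← List.toFinset_append, List.cons_append]
  refine ⟨b, w, hw, ?_, ?_, ?_⟩
  · rw [hsupport, List.toFinset_card_of_nodup hcycle, ← List.cons_append, List.length_append, hZlen,
      card_singleton]
  · rw [hsupport', union_assoc]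
    exact subset_union_left
  · rw [hsupport', union_assoc]
    exact union_subset_union_right (union_subset h.isExtendable.subset fun z hz =>
      (mem_sdiff.1 (hZ.mem_sdiff z (List.mem_toFinset.1 hz))).1)

lemma isExtendable_empty (hexp : ∀ U : Finset V, #U ≤ 2 * s → D * #U ≤ #(nbrsIn G R U)) :
    IsExtendable G D s R ⟨∅, id⟩ where
  subset := empty_subset R
  adj_parent y hy := absurd hy (notMem_empty y)
  parent_notMem y hy := absurd hy (notMem_empty y)
  expands U hU := (hexp U hU).trans <| card_le_card <| by
    simpa only [sdiff_empty] using nbrsIn_subset_reach (F := ⟨∅, id⟩)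

theorem exists_isCycle_card_eq (hJ : IsJoined G s) (hR : Disjoint R₁ R)
    (hexp : ∀ U : Finset V, #U ≤ 2 * s → D * #U ≤ #(nbrsIn G R U)) (hD : 4 ≤ D)
    (hR₁ : 3 ≤ #R₁) (hm : #R₁ + 10 * s ≤ m) (hroom : m + (2 * D + 9) * s ≤ #R₁ + #R) :
    ∃ (y : V) (w : G.Walk y y), w.IsCycle ∧ #w.support.toFinset = m ∧
      R₁ ⊆ w.support.toFinset ∧ w.support.toFinset ⊆ R₁ ∪ R := by
  have hdepth : doublingDepth s 1 ≤ s := by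
    rw [doublingDepth_eq_card one_pos]
    exact (card_filter_le _ _).trans (card_range s).le
  have hs₉ : (2 * D + 9) * s = (2 * D + 1) * s + 8 * s := by ring
  have hs₁₇ : (2 * D + 17) * s = (2 * D + 9) * s + 8 * s := by ring
  obtain ⟨F, P, h, hF⟩ := (isExtendable_empty hexp).exists_isJoinable_singleton hJ rfl hD hR
    (card_pos.1 (by omega)) (by omega)
  have hP := h.length_eq hR
  obtain ⟨F', Z, hZ, h'⟩ := h.exists_append hJ hR (by omega) (m - P.length - 2 * doublingDepth s 1)
    (by omega)
  have hP' := h'.length_eq hR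
  rw [List.length_append] at hP'
  obtain ⟨y, w, hw, hcard, hsub⟩ := h'.exists_isCycle hJ hR
    (by rw [List.length_append]; omega) (by omega)
  rw [List.length_append] at hcard
  exact ⟨y, w, hw, by omega, hsub⟩

end Cycle

section Spikes

open Finset

lemma IsJoined.card_le_card_nbrsIn {V : Type*} {G : SimpleGraph V} {s : ℕ}
    {A B X : Finset V} (hJ : IsJoined G s) (hAB : #A ≤ #B)
    (hA : ∀ X ⊆ A, #X < s → #X ≤ #(nbrsIn G B X)) (hB : ∀ X ⊆ B, #X < s → #X ≤ #(nbrsIn G A X))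
    (hX : X ⊆ A) : #X ≤ #(nbrsIn G B X) := by
  rcases lt_or_ge #X s with hXs | hXs
  · exact hA X hX hXs
  set Y := B \ nbrsIn G B X
  have hXY : ∀ x ∈ X, ∀ y ∈ Y, ¬G.Adj x y := fun x hx y hy hxy =>
    (mem_sdiff.1 hy).2 (mem_nbrsIn.2 ⟨(mem_sdiff.1 hy).1, x, hx, hxy⟩)
  have hYs : #Y < s := by
    by_contra! hYs
    obtain ⟨x, hx, y, hy, hxy⟩ := hJ hXs hYs
    exact hXY x hx y hy hxy
  have hYX : nbrsIn G A Y ⊆ A \ X := fun x hx => by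
    obtain ⟨hxA, y, hy, hyx⟩ := mem_nbrsIn.1 hx
    exact mem_sdiff.2 ⟨hxA, fun hxX => hXY x hxX y hy hyx.symm⟩
  have hYle := (hB Y sdiff_subset hYs).trans (card_le_card hYX)
  have hY : #B - #(nbrsIn G B X) ≤ #Y := le_card_sdiff _ _
  have hAX := card_sdiff_add_card_eq_card hX
  omega

theorem IsJoined.exists_injective_adj {V : Type*} {G : SimpleGraph V} {s : ℕ}
    {A B : Finset V} (hJ : IsJoined G s) (hAB : #A ≤ #B)
    (hA : ∀ X ⊆ A, #X < s → #X ≤ #(nbrsIn G B X)) (hB : ∀ X ⊆ B, #X < s → #X ≤ #(nbrsIn G A X)) :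
    ∃ f : A → V, Function.Injective f ∧ ∀ x : A, f x ∈ B ∧ G.Adj x (f x) := by
  have hall : ∀ S : Finset A, #S ≤ #(S.biUnion fun x => {y ∈ B | G.Adj x y}) := fun S => by
    have hnbrs : S.biUnion (fun x => {y ∈ B | G.Adj x y}) =
        nbrsIn G B (S.map (Function.Embedding.subtype _)) := by
      ext y
      simp only [mem_biUnion, mem_filter, mem_nbrsIn, mem_map, Function.Embedding.subtype_apply]
      constructor
      · rintro ⟨x, hx, hy, hxy⟩
        exact ⟨hy, x, ⟨x, hx, rfl⟩, hxy⟩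
      · rintro ⟨hy, _, ⟨x, hx, rfl⟩, hxy⟩
        exact ⟨x, hx, hy, hxy⟩
    rw [hnbrs, ← card_map (Function.Embedding.subtype (· ∈ A))]
    exact hJ.card_le_card_nbrsIn hAB hA hB fun x hx => by
      obtain ⟨x, -, rfl⟩ := mem_map.1 hx
      exact x.2
  obtain ⟨f, hf, hmem⟩ := (all_card_le_biUnion_card_iff_exists_injective _).1 hall
  exact ⟨f, hf, fun x => mem_filter.1 (hmem x)⟩

theorem containsSpanningCrown_of_isCycle {n : ℕ} {G : SimpleGraph (Fin n)} {v : Fin n}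
    {c : G.Walk v v} (hc : c.IsCycle) {f : ((c.support.toFinset)ᶜ : Finset (Fin n)) → Fin n}
    (hf : Function.Injective f) (hadj : ∀ x, f x ∈ c.support.toFinset ∧ G.Adj x (f x)) :
    ContainsSpanningCrown n G #(c.support.toFinset)ᶜ := by
  have hnotMem : ∀ x : ((c.support.toFinset)ᶜ : Finset (Fin n)), x.1 ∉ c.support := fun x hx =>
    mem_compl.1 x.2 (List.mem_toFinset.2 hx)
  have hmem : ∀ x, f x ∈ c.support := fun x => List.mem_toFinset.1 (hadj x).1
  have hspike : ∀ x y z, z ∈ s(x.1, f x) → z ∈ s(y.1, f y) → x = y := by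
    intro x y z hx hy
    rcases Sym2.mem_iff.1 hx with rfl | rfl <;> rcases Sym2.mem_iff.1 hy with hxy | hxy
    · exact Subtype.ext hxy
    · exact absurd (hxy ▸ hmem y) (hnotMem x)
    · exact absurd (hxy ▸ hmem x) (hnotMem y)
    · exact hf hxy
  have hinj : Function.Injective fun x => s(x.1, f x) := fun x y hxy =>
    hspike x y x (Sym2.mem_mk_left _ _) (by simpa only [← hxy] using Sym2.mem_mk_left x.1 (f x))
  refine ⟨v, c, univ.image fun x => s(x.1, f x), hc, ?_, ?_, ?_, ?_, ?_, fun x => ?_⟩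
  · rw [card_image_of_injective _ hinj, card_univ, Fintype.card_coe]
  all_goals simp only [mem_image, mem_univ, true_and, forall_exists_index, forall_apply_eq_imp_iff]
  · exact fun x => (hadj x).2
  · exact fun x y hxy z hx hy => hxy (by rw [hspike x y z hx hy])
  · exact fun x hx => hnotMem x (SimpleGraph.Walk.fst_mem_support_of_mem_edges _ hx)
  · refine fun x => ⟨f x, ⟨Sym2.mem_mk_right _ _, hmem x⟩, fun y ⟨hy, hyc⟩ => ?_⟩
    exact (Sym2.mem_iff.1 hy).resolve_left fun hyx => hnotMem x (hyx ▸ hyc)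
  · by_cases hx : x ∈ c.support
    · exact Or.inl hx
    · have hx' : x ∈ (c.support.toFinset)ᶜ := mem_compl.2 fun h => hx (List.mem_toFinset.1 h)
      exact Or.inr ⟨_, ⟨⟨x, hx'⟩, rfl⟩, Sym2.mem_mk_left _ _⟩

end Spikes

section Crown

open Finset

variable {n d : ℕ} {G : SimpleGraph (Fin n)} {col : Fin n → Fin 3} {F : Finset (Fin n)}

lemma IsBalancedColouring.le_degree (hcol : IsBalancedColouring G d col) {i : Fin 3}
    (hF : ∀ x, col x = i → x ∈ F) (x : Fin n) : 3 * d ≤ 10 * #{y ∈ F | G.Adj x y} :=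
  (hcol x i).trans <| Nat.mul_le_mul_left 10 <| card_le_card fun y hy => by
    obtain ⟨hxy, hy⟩ := (mem_filter_univ y).1 hy
    exact mem_filter.2 ⟨hF y hy, hxy⟩

theorem IsNDLGraph.containsSpanningCrown_of_isBalancedColouring
    (hG : IsNDLGraph n G d (d / 1000)) (hd : 0 < d) (hn : 100000 ≤ n)
    (hcol : IsBalancedColouring G d col) : ContainsSpanningCrown n G (n / 2) := by
  set s := n / 500 + 1
  have hd' : (0 : ℝ) < d := by exact_mod_cast hd
  have hJ : IsJoined G s := hG.isJoined (by positivity) (by linarith) (by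
    have hns : (n : ℝ) < 500 * s := by exact_mod_cast (by omega : n < 500 * s)
    nlinarith)
  set K : Fin 3 → Finset (Fin n) := fun i => {x | col x = i}
  have hexp : ∀ i F, K i ⊆ F → ∀ X, #X ≤ 2 * s → 4 * #X ≤ #(nbrsIn G F X) := fun i F hF X hX =>
    hG.four_mul_card_le_card_nbrsIn hd (by omega) hX fun x _ =>
      hcol.le_degree (fun y hy => hF ((mem_filter_univ y).2 hy)) x
  have hsize : ∀ i, 299 * n ≤ 1000 * #(K i) := fun i =>
    hG.le_card_of_forall_le_degree hd (hcol.le_degree fun y hy => (mem_filter_univ y).2 hy)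
  have hdisj : ∀ {i j}, i ≠ j → Disjoint (K i) (K j) := fun hij =>
    disjoint_filter.2 fun _ _ hi hj => hij (hi.symm.trans hj)
  have hsum : n = #(K 0) + #(K 1) + #(K 2) := by
    have h := card_eq_sum_card_fiberwise (f := col) (s := univ) (t := univ) fun _ _ => by simp
    rwa [card_univ, Fintype.card_fin, Fin.sum_univ_three] at h
  have h₀ := hsize 0
  have h₁ := hsize 1
  have h₂ := hsize 2
  obtain ⟨v, c, hc, hcard, hK₀, hK₀₂⟩ := exists_isCycle_card_eq (m := n - n / 2) hJ
    (hdisj (by decide : (0 : Fin 3) ≠ 2)) (hexp 2 _ subset_rfl) le_rfl (by omega) (by omega)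
    (by omega)
  have hK₁ : K 1 ⊆ (c.support.toFinset)ᶜ := subset_compl_iff_disjoint_right.2 <|
    (disjoint_union_right.2 ⟨hdisj (by decide), hdisj (by decide)⟩).mono_right hK₀₂
  have hcompl : #(c.support.toFinset)ᶜ = n / 2 := by
    rw [card_compl, hcard, Fintype.card_fin]
    omega
  obtain ⟨f, hf, hadj⟩ := hJ.exists_injective_adj (A := (c.support.toFinset)ᶜ)
    (B := c.support.toFinset) (by omega)
    (fun X _ hX => by have := hexp 0 _ hK₀ X (by omega); omega)
    (fun X _ hX => by have := hexp 1 _ hK₁ X (by omega); omega)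
  exact hcompl ▸ containsSpanningCrown_of_isCycle hc hf hadj

end Crown

/-- There exists `d₀` such that every `(n,d,λ)`-graph with `λ/d ≤ 0.001` and `d ≥ d₀`
contains a crown on `n` vertices with `⌊n/2⌋` spikes. -/
theorem crown_in_pseudorandom_graph :
    ∃ d₀ : ℕ, ∀ (n d : ℕ) (lam : ℝ) (G : SimpleGraph (Fin n)),
      IsNDLGraph n G d lam → lam / (d : ℝ) ≤ 0.001 → d ≥ d₀ →
      ContainsSpanningCrown n G (n / 2) := by
  obtain ⟨d₀, hd₀⟩ := Filter.eventually_atTop.1 eventually_tailRate_pow_mul_le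
  refine ⟨max d₀ 100000, fun n d lam G hG hlam hd => ?_⟩
  obtain ⟨hthr, hd⟩ := max_le_iff.1 hd
  have hdR : (0 : ℝ) < d := by exact_mod_cast (by omega : 0 < d)
  have hlam : lam ≤ d / 1000 := by
    rw [div_le_iff₀ hdR] at hlam
    linarith
  have hdn : d < n := by
    have h := G.degree_lt_card_verts ⟨0, hG.pos⟩
    rwa [hG.1, Fintype.card_fin] at h
  obtain ⟨col, hcol⟩ := exists_isBalancedColouring (by omega) hG.1 (hd₀ d hthr)
  exact (hG.mono hlam).containsSpanningCrown_of_isBalancedColouring (by omega) (by omega) hcol
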